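/- arXiv:1707.04830 — 8 statements merged into one kernel-verified Lean document; each statement's English description precedes it below -/
import Mathlib

section
/- For any convex body A in ℝ² there exist a real number a ∈ [0,1] and an invertible affine map T : ℝ² → ℝ² such that L_a ⊆ T(A) ⊆ U_a. -/
/-- A convex body in the plane: compact, convex, with nonempty interior. -/
def IsConvexBody (A : Set (ℝ × ℝ)) : Prop :=
  Convex ℝ A ∧ IsCompact A ∧ (interior A).Nonempty

/-- The 7-gon `L_a` with vertices (0, 2a/(1+a)), (±1,1), (±2,2), (±1,3). -/
noncomputable def L (a : ℝ) : Set (ℝ × ℝ) :=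
  convexHull ℝ {((0 : ℝ), 2 * a / (1 + a)), (1, 1), (-1, 1), (2, 2), (-2, 2), (1, 3), (-1, 3)}

/-- The polygon `U_a` from Definition 2.1. -/
noncomputable def U (a : ℝ) : Set (ℝ × ℝ) :=
  if a < 1 / 2 then
    convexHull ℝ {((a : ℝ), a), (-a, a), (2 + a, 2 - a), (-(2 + a), 2 - a),
      (3 - a, 3 - a), (-(3 - a), 3 - a), (3 - 2 * a, 3), (-(3 - 2 * a), 3),
      (a, 4 - a), (-a, 4 - a)}
  else
    convexHull ℝ {((a : ℝ), a), (-a, a), (3 - 2 * a, 1), (-(3 - 2 * a), 1),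
      (3 - a, 1 + a), (-(3 - a), 1 + a), (3 - a, 3 - a), (-(3 - a), 3 - a),
      (3 - 2 * a, 3), (-(3 - 2 * a), 3), (a, 4 - a), (-a, 4 - a)}

abbrev Cfg := (ℝ × ℝ) × (ℝ × ℝ) × ℝ × ℝ

noncomputable def uu (θ : ℝ) : ℝ × ℝ := (Real.cos θ, Real.sin θ)

noncomputable def al : Fin 6 → ℝ := ![1, 1, 0, 0, 1/2, 1/2]
noncomputable def be : Fin 6 → ℝ := ![0, 1, 0, 1, -1/2, 3/2]
noncomputable def ga : Fin 6 → ℝ := ![0, 0, 0, 0, 1, 1]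

noncomputable def PP (θ : ℝ) (c : Cfg) (k : Fin 6) : ℝ × ℝ :=
  al k • c.1 + (1 - al k) • c.2.1 + (be k * c.2.2.1 + ga k * c.2.2.2) • uu θ

noncomputable def HH (θ : ℝ) (c : Cfg) : ℝ :=
  Real.cos θ * (c.2.1.2 - c.1.2) - Real.sin θ * (c.2.1.1 - c.1.1)

noncomputable def FF (θ : ℝ) (c : Cfg) : ℝ := c.2.2.1 * HH θ c

def Feas (A : Set (ℝ × ℝ)) (θ : ℝ) (c : Cfg) : Prop := 0 ≤ c.2.2.1 ∧ ∀ k, PP θ c k ∈ A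

def Opt (A : Set (ℝ × ℝ)) (θ : ℝ) (c : Cfg) : Prop :=
  Feas A θ c ∧ ∀ c', Feas (interior A) θ c' → FF θ c' ≤ FF θ c

lemma PP_lin (θ : ℝ) (c1 c2 : Cfg) (l m : ℝ) (k : Fin 6) :
    PP θ (l • c1 + m • c2) k = l • PP θ c1 k + m • PP θ c2 k := by
  ext <;> simp [PP] <;> ring

lemma PP_const (θ : ℝ) (p : ℝ × ℝ) (k : Fin 6) : PP θ (p, p, 0, 0) k = p := by
  ext <;> simp [PP]

lemma HH_lin (θ : ℝ) (c1 c2 : Cfg) (l m : ℝ) :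
    HH θ (l • c1 + m • c2) = l * HH θ c1 + m * HH θ c2 := by
  simp [HH]; ring

lemma opt_strong {A : Set (ℝ × ℝ)} (hA : IsConvexBody A) {θ : ℝ} {c : Cfg} (h : Opt A θ c)
    (c' : Cfg) (hc' : Feas A θ c') : FF θ c' ≤ FF θ c := by
  obtain ⟨hconv, -, p, hp⟩ := hA
  have key : ∀ e ∈ Set.Ioo (0:ℝ) 1, (1 - e)^2 * FF θ c' ≤ FF θ c := by
    intro e he
    have := h.2 ((1 - e) • c' + e • ((p, p, 0, 0) : Cfg)) ?_
    · have h2 : FF θ ((1 - e) • c' + e • ((p, p, 0, 0) : Cfg)) = (1 - e)^2 * FF θ c' := by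
        unfold FF; rw [HH_lin]; simp [HH]; ring
      linarith
    · refine ⟨?_, fun k => ?_⟩
      · simp; exact mul_nonneg (by linarith [he.2]) hc'.1
      · rw [PP_lin, PP_const]
        exact hconv.combo_self_interior_mem_interior (hc'.2 k) hp (by linarith [he.2]) he.1 (by ring)
  have ht : Filter.Tendsto (fun e : ℝ => (1 - e)^2 * FF θ c') (nhdsWithin 0 (Set.Ioi 0))
      (nhds ((1 - 0)^2 * FF θ c')) := by
    apply Filter.Tendsto.mono_left _ nhdsWithin_le_nhds
    exact (Continuous.tendsto (by fun_prop) 0)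
  have := le_of_tendsto ht (by
    filter_upwards [Ioo_mem_nhdsGT (show (0:ℝ) < 1 by norm_num)] with e he using key e he)
  simpa using this

lemma exists_pos {A : Set (ℝ × ℝ)} (hA : IsConvexBody A) (θ : ℝ) :
    ∃ c, Feas A θ c ∧ 0 < FF θ c := by
  obtain ⟨hconv, -, p, hp⟩ := hA
  rw [mem_interior_iff_mem_nhds, Metric.mem_nhds_iff] at hp
  obtain ⟨r, hr, hb⟩ := hp
  have h1 := Real.abs_cos_le_one θ
  have h2 := Real.abs_sin_le_one θ
  rw [abs_le] at h1 h2
  refine ⟨((p.1 + (r/8) * Real.sin θ, p.2 - (r/8) * Real.cos θ),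
    (p.1 - (r/8) * Real.sin θ, p.2 + (r/8) * Real.cos θ), r/8, 0), ⟨?_, fun k => hb ?_⟩, ?_⟩
  · simp; positivity
  · rw [Metric.mem_ball, Prod.dist_eq, Real.dist_eq, Real.dist_eq, max_lt_iff, abs_lt, abs_lt]
    have : 0 ≤ 1 - Real.cos θ := by linarith
    have : 0 ≤ 1 + Real.cos θ := by linarith
    have : 0 ≤ 1 - Real.sin θ := by linarith
    have : 0 ≤ 1 + Real.sin θ := by linarith
    fin_cases k <;> simp [PP, al, be, ga, uu] <;> refine ⟨⟨?_, ?_⟩, ?_, ?_⟩ <;> nlinarith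
  · have : FF θ ((p.1 + (r/8) * Real.sin θ, p.2 - (r/8) * Real.cos θ),
      (p.1 - (r/8) * Real.sin θ, p.2 + (r/8) * Real.cos θ), r/8, 0) = r^2/32 *
        (Real.sin θ ^2 + Real.cos θ ^2) := by simp only [FF, HH]; ring
    rw [this, Real.sin_sq_add_cos_sq]; positivity

lemma opt_pos {A : Set (ℝ × ℝ)} (hA : IsConvexBody A) {θ : ℝ} {c : Cfg} (h : Opt A θ c) :
    0 < c.2.2.1 ∧ 0 < HH θ c := by
  obtain ⟨c', h1, h2⟩ := exists_pos hA θ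
  have h3 : 0 < c.2.2.1 * HH θ c := lt_of_lt_of_le h2 (opt_strong hA h c' h1)
  have h4 := h.1.1
  rcases h4.eq_or_lt with h5 | h5
  · rw [← h5] at h3; simp at h3
  · exact ⟨h5, (pos_iff_pos_of_mul_pos h3).1 h5⟩

lemma opt_convex {A : Set (ℝ × ℝ)} (hA : IsConvexBody A) {θ : ℝ} {c1 c2 : Cfg}
    (h1 : Opt A θ c1) (h2 : Opt A θ c2) (l m : ℝ) (hl : 0 ≤ l) (hm : 0 ≤ m) (hlm : l + m = 1) :
    Opt A θ (l • c1 + m • c2) := by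
  have e : FF θ c1 = FF θ c2 := le_antisymm (opt_strong hA h2 c1 h1.1) (opt_strong hA h1 c2 h2.1)
  obtain ⟨p1, q1⟩ := opt_pos hA h1
  obtain ⟨p2, q2⟩ := opt_pos hA h2
  refine ⟨⟨?_, fun k => ?_⟩, fun c' hc' => (h1.2 c' hc').trans ?_⟩
  · simp; positivity
  · rw [PP_lin]; exact hA.1 (h1.1.2 k) (h2.1.2 k) hl hm hlm
  · have : FF θ (l • c1 + m • c2) = (l * c1.2.2.1 + m * c2.2.2.1) * (l * HH θ c1 + m * HH θ c2) := by
      unfold FF; rw [HH_lin]; simp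
    rw [this]
    unfold FF at e ⊢
    generalize HH θ c1 = H1 at *
    generalize HH θ c2 = H2 at *
    generalize c1.2.2.1 = d1 at *
    generalize c2.2.2.1 = d2 at *
    have hk : 2 * (d1 * H1) ≤ d1 * H2 + d2 * H1 := by
      have : (2 * (d1 * H1))^2 ≤ (d1 * H2 + d2 * H1)^2 := by
        have : (d1 * H2 + d2 * H1)^2 = (d1*H2 - d2*H1)^2 + 4 * (d1*H1)*(d2*H2) := by ring
        rw [this, ← e]; nlinarith [sq_nonneg (d1*H2 - d2*H1)]
      exact le_of_sq_le_sq this (by positivity) 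
    have : (l * d1 + m * d2) * (l * H1 + m * H2) = l^2 * (d1*H1) + m^2*(d2 * H2) +
      l*m*(d1 * H2 + d2 * H1) := by ring
    rw [this, ← e]
    have hh : d1 * H1 = (l+m)^2 * (d1*H1) := by rw [hlm]; ring
    nlinarith [mul_nonneg hl hm]

lemma feas_bdd {A : Set (ℝ × ℝ)} (hA : IsConvexBody A) : ∃ K : Set Cfg, IsCompact K ∧
    ∀ θ c, Feas A θ c → c ∈ K := by
  obtain ⟨-, hc, -⟩ := hA
  obtain ⟨M, hM⟩ := hc.isBounded.exists_norm_le
  refine ⟨A ×ˢ A ×ˢ Set.Icc 0 (4*M) ×ˢ Set.Icc (-(4*M)) (4*M),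
    hc.prod (hc.prod (isCompact_Icc.prod isCompact_Icc)), ?_⟩
  rintro θ ⟨b, t, d, s⟩ ⟨h0, h⟩
  have hx : ∀ k, |(PP θ (b,t,d,s) k).1| ≤ M ∧ |(PP θ (b,t,d,s) k).2| ≤ M := by
    intro k
    have := hM _ (h k)
    rw [Prod.norm_def, max_le_iff] at this
    exact this
  have g0 := hx 0
  have g1 := hx 1
  have g2 := hx 2
  have g3 := hx 3
  have g4 := hx 4
  have g5 := hx 5
  have m0 := h 0
  have m2 := h 2
  simp [PP, al, be, ga, uu, abs_le] at g0 g1 g2 g3 g4 g5 m0 m2 h0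
  have h1 := Real.abs_cos_le_one θ
  have h2 := Real.abs_sin_le_one θ
  have h3 := Real.sin_sq_add_cos_sq θ
  generalize Real.cos θ = C at *
  generalize Real.sin θ = S at *
  have hpr : ∀ x y B : ℝ, |x| ≤ B → |y| ≤ B → |x * C + y * S| ≤ 2 * B := by
    intro x y B hx hy
    have := abs_add_le (x*C) (y*S)
    rw [abs_mul, abs_mul] at this
    nlinarith [abs_nonneg x, abs_nonneg y, abs_nonneg C, abs_nonneg S]
  have hd : |d * C * C + d * S * S| ≤ 2 * (2 * M) :=
    hpr (d * C) (d * S) _ (by rw [abs_le]; constructor <;> linarith)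
      (by rw [abs_le]; constructor <;> linarith)
  have hs : |s * C * C + s * S * S| ≤ 2 * (2 * M) :=
    hpr (s * C) (s * S) _ (by rw [abs_le]; constructor <;> linarith)
      (by rw [abs_le]; constructor <;> linarith)
  have e1 : d * C * C + d * S * S = d := by linear_combination d * h3
  have e2 : s * C * C + s * S * S = s := by linear_combination s * h3
  rw [e1, abs_le] at hd
  rw [e2, abs_le] at hs
  refine ⟨m0, m2, ⟨h0, ?_⟩, ?_, ?_⟩ <;> simp <;> linarith

lemma PP_cont (k : Fin 6) : Continuous fun q : ℝ × Cfg => PP q.1 q.2 k := by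
  unfold PP uu
  fun_prop

lemma FF_cont : Continuous fun q : ℝ × Cfg => FF q.1 q.2 := by
  unfold FF HH
  fun_prop

lemma feas_closed {A : Set (ℝ × ℝ)} (hA : IsConvexBody A) :
    IsClosed {q : ℝ × Cfg | Feas A q.1 q.2} := by
  unfold Feas
  simp only [Set.ofPred_and, Set.ofPred_forall]
  refine IsClosed.inter (isClosed_le (by fun_prop) (by fun_prop)) (isClosed_iInter fun k => ?_)
  exact hA.2.1.isClosed.preimage (PP_cont k)

lemma opt_closed {A : Set (ℝ × ℝ)} (hA : IsConvexBody A) :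
    IsClosed {q : ℝ × Cfg | Opt A q.1 q.2} := by
  unfold Opt
  simp only [Set.ofPred_and, Set.ofPred_forall]
  refine IsClosed.inter (feas_closed hA) (isClosed_iInter fun c' => ?_)
  simp only [imp_iff_not_or, Set.ofPred_or]
  refine IsClosed.union ?_ (isClosed_le ?_ FF_cont)
  · have : {q : ℝ × Cfg | ¬ Feas (interior A) q.1 c'} =
      ({q | 0 ≤ c'.2.2.1} ∩ ⋂ k, {q | PP q.1 c' k ∈ interior A})ᶜ := by
      ext q; simp only [Feas, Set.mem_ofPred_eq, Set.mem_compl_iff, Set.mem_inter_iff, Set.mem_iInter]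
    rw [this, isClosed_compl_iff]
    refine isOpen_const.inter (isOpen_iInter_of_finite fun k => ?_)
    exact isOpen_interior.preimage
      ((PP_cont k).comp (by fun_prop : Continuous fun q : ℝ × Cfg => (q.1, c')))
  · exact FF_cont.comp (by fun_prop : Continuous fun q : ℝ × Cfg => (q.1, c'))

lemma opt_exists {A : Set (ℝ × ℝ)} (hA : IsConvexBody A) (θ : ℝ) : ∃ c, Opt A θ c := by
  obtain ⟨K, hK, hK2⟩ := feas_bdd hA
  have hc : IsClosed {c | Feas A θ c} :=
    (feas_closed hA).preimage (by fun_prop : Continuous fun c : Cfg => (θ, c))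
  have hcomp : IsCompact {c | Feas A θ c} := hK.of_isClosed_subset hc (fun c hc => hK2 θ c hc)
  obtain ⟨c0, h0, -⟩ := exists_pos hA θ
  obtain ⟨c, hc, hm⟩ := hcomp.exists_isMaxOn ⟨c0, h0⟩
    ((FF_cont.comp (by fun_prop : Continuous fun c : Cfg => (θ, c))).continuousOn)
  exact ⟨c, hc, fun c' hc' => hm ⟨hc'.1, fun k => interior_subset (hc'.2 k)⟩⟩

noncomputable def flp (θ : ℝ) (c : Cfg) : Cfg :=
  (c.2.1 + c.2.2.1 • uu θ, c.1 + c.2.2.1 • uu θ, c.2.2.1, -c.2.2.2)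

lemma flp_feas {A : Set (ℝ × ℝ)} {θ θ' : ℝ} (hc : Real.cos θ' = - Real.cos θ)
    (hs : Real.sin θ' = - Real.sin θ) {c : Cfg} (h : Feas A θ c) :
    Feas A θ' (flp θ c) := by
  obtain ⟨b, t, d, s⟩ := c
  refine ⟨h.1, fun k => ?_⟩
  have e : PP θ' (flp θ (b,t,d,s)) k = PP θ (b,t,d,s) (![3,2,1,0,5,4] k) := by
    fin_cases k <;> ext <;> simp [PP, flp, uu, hc, hs, al, be, ga] <;> ring
  rw [e]; exact h.2 _

lemma flp_FF {θ θ' : ℝ} (hc : Real.cos θ' = - Real.cos θ)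
    (hs : Real.sin θ' = - Real.sin θ) (c : Cfg) : FF θ' (flp θ c) = FF θ c := by
  simp only [FF, HH, flp, hc, hs, uu, Prod.fst_add, Prod.snd_add, Prod.smul_fst, Prod.smul_snd]; ring

lemma flp_opt {A : Set (ℝ × ℝ)} {θ θ' : ℝ} (hc : Real.cos θ' = - Real.cos θ)
    (hs : Real.sin θ' = - Real.sin θ) {c : Cfg} (h : Opt A θ c) :
    Opt A θ' (flp θ c) := by
  refine ⟨flp_feas hc hs h.1, fun c' hc' => ?_⟩
  have hc2 : Real.cos θ = - Real.cos θ' := by linarith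
  have hs2 : Real.sin θ = - Real.sin θ' := by linarith
  rw [flp_FF hc hs, ← flp_FF hc2 hs2]
  exact h.2 _ (flp_feas hc2 hs2 hc')

lemma opt_zero {A : Set (ℝ × ℝ)} (hA : IsConvexBody A) :
    ∃ θ c, Opt A θ c ∧ c.2.2.2 = 0 := by
  obtain ⟨K, hK, hK2⟩ := feas_bdd hA
  have hcl : ∀ G : Set (ℝ × Cfg), IsClosed G → G ⊆ {q : ℝ × Cfg | Opt A q.1 q.2} →
      IsClosed (Prod.fst '' (G ∩ (Set.Icc 0 Real.pi ×ˢ K))) := by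
    intro G hG hs
    apply IsCompact.isClosed
    exact ((isCompact_Icc.prod hK).inter_left hG).image continuous_fst
  have c1 := hcl ({q : ℝ × Cfg | Opt A q.1 q.2} ∩ {q | 0 ≤ q.2.2.2.2})
    ((opt_closed hA).inter (isClosed_le (by fun_prop) (by fun_prop))) Set.inter_subset_left
  have c2 := hcl ({q : ℝ × Cfg | Opt A q.1 q.2} ∩ {q | q.2.2.2.2 ≤ 0})
    ((opt_closed hA).inter (isClosed_le (by fun_prop) (by fun_prop))) Set.inter_subset_left
  have hpi : (0:ℝ) ≤ Real.pi := Real.pi_pos.le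
  have key := (isPreconnected_closed_iff.1 (isPreconnected_Icc (a := (0:ℝ)) (b := Real.pi))) _ _ c1 c2
    (by
      intro θ hθ
      obtain ⟨c, hc⟩ := opt_exists hA θ
      rcases le_total 0 c.2.2.2 with h | h
      · left; exact ⟨(θ, c), ⟨⟨hc, h⟩, hθ, hK2 _ _ hc.1⟩, rfl⟩
      · right; exact ⟨(θ, c), ⟨⟨hc, h⟩, hθ, hK2 _ _ hc.1⟩, rfl⟩)
  have hne : ∃ c c', Opt A 0 c ∧ Opt A Real.pi c' ∧ c'.2.2.2 = - c.2.2.2 := by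
    obtain ⟨c, hc⟩ := opt_exists hA 0
    exact ⟨c, flp 0 c, hc, flp_opt (by simp) (by simp) hc, rfl⟩
  obtain ⟨c, c', hc, hc', e⟩ := hne
  have z0 : (0:ℝ) ∈ Set.Icc 0 Real.pi := ⟨le_rfl, hpi⟩
  have z1 : Real.pi ∈ Set.Icc 0 Real.pi := ⟨hpi, le_rfl⟩
  have : (Set.Icc 0 Real.pi ∩ (Prod.fst '' (({q : ℝ × Cfg | Opt A q.1 q.2} ∩ {q | 0 ≤ q.2.2.2.2}) ∩
      (Set.Icc 0 Real.pi ×ˢ K)) ∩ Prod.fst '' (({q : ℝ × Cfg | Opt A q.1 q.2} ∩ {q | q.2.2.2.2 ≤ 0}) ∩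
      (Set.Icc 0 Real.pi ×ˢ K)))).Nonempty := by
    rcases le_total 0 c.2.2.2 with h | h
    · exact key ⟨0, z0, (0, c), ⟨⟨hc, h⟩, z0, hK2 _ _ hc.1⟩, rfl⟩
        ⟨Real.pi, z1, (Real.pi, c'), ⟨⟨hc', by simp [e, h]⟩, z1, hK2 _ _ hc'.1⟩, rfl⟩
    · exact key ⟨Real.pi, z1, (Real.pi, c'), ⟨⟨hc', by simp [e, h]⟩, z1, hK2 _ _ hc'.1⟩, rfl⟩
        ⟨0, z0, (0, c), ⟨⟨hc, h⟩, z0, hK2 _ _ hc.1⟩, rfl⟩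
  obtain ⟨θ, -, ⟨⟨_, a1⟩, ⟨⟨h1, h2⟩, -⟩, rfl⟩, ⟨⟨θ', a2⟩, ⟨⟨h3, h4⟩, -⟩, e2⟩⟩ := this
  simp only at e2
  subst e2
  simp only [Set.mem_ofPred_eq] at h1 h2 h3 h4
  rcases h2.eq_or_lt with h | h
  · exact ⟨_, a1, h1, h.symm⟩
  · have hp : 0 < a1.2.2.2 - a2.2.2.2 := by linarith
    refine ⟨_, _, opt_convex hA h1 h3 (-a2.2.2.2 / (a1.2.2.2 - a2.2.2.2))
      (a1.2.2.2 / (a1.2.2.2 - a2.2.2.2)) (div_nonneg (by linarith) hp.le)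
      (div_nonneg h.le hp.le) (by field_simp; ring), ?_⟩
    simp; field_simp; ring

lemma seg {B : Set (ℝ × ℝ)} (hB : Convex ℝ B) {x1 y1 x2 y2 x y : ℝ} (h1 : (x1, y1) ∈ B)
    (h2 : (x2, y2) ∈ B) (l : ℝ) (l0 : 0 ≤ l) (l1 : l ≤ 1) (hx : x = x1 + l * (x2 - x1))
    (hy : y = y1 + l * (y2 - y1)) : (x, y) ∈ B := by
  have := hB h1 h2 (sub_nonneg.2 l1) l0 (by ring)
  convert this using 1
  ext
  · simp [hx]; ring
  · simp [hy]; ring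

lemma hseg {B : Set (ℝ × ℝ)} (hB : Convex ℝ B) {x1 x2 y x : ℝ} (h1 : (x1, y) ∈ B)
    (h2 : (x2, y) ∈ B) (a1 : x1 ≤ x) (a2 : x ≤ x2) : (x, y) ∈ B := by
  rcases (a1.trans a2).eq_or_lt with h | h
  · have : x = x1 := by linarith
    rw [this]; exact h1
  · have hp : 0 < x2 - x1 := by linarith
    refine seg hB h1 h2 ((x - x1) / (x2 - x1)) (div_nonneg (by linarith) hp.le)
      ((div_le_one hp).2 (by linarith)) (by field_simp; ring) (by ring)

lemma vseg {B : Set (ℝ × ℝ)} (hB : Convex ℝ B) {y1 y2 y x : ℝ} (h1 : (x, y1) ∈ B)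
    (h2 : (x, y2) ∈ B) (a1 : y1 ≤ y) (a2 : y ≤ y2) : (x, y) ∈ B := by
  rcases (a1.trans a2).eq_or_lt with h | h
  · have : y = y1 := by linarith
    rw [this]; exact h1
  · have hp : 0 < y2 - y1 := by linarith
    refine seg hB h1 h2 ((y - y1) / (y2 - y1)) (div_nonneg (by linarith) hp.le)
      ((div_le_one hp).2 (by linarith)) (by ring) (by field_simp; ring)

/-- Normalised position: contains the hexagon and is horizontally optimal. -/
structure NP (B : Set (ℝ × ℝ)) : Prop where
  cv : Convex ℝ B
  v0 : ((1:ℝ), (1:ℝ)) ∈ B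
  v1 : ((2:ℝ), (2:ℝ)) ∈ B
  v2 : ((1:ℝ), (3:ℝ)) ∈ B
  v3 : ((-1:ℝ), (3:ℝ)) ∈ B
  v4 : ((-2:ℝ), (2:ℝ)) ∈ B
  v5 : ((-1:ℝ), (1:ℝ)) ∈ B
  opt : ∀ bx by' tx ty d s : ℝ, 0 ≤ d → (bx, by') ∈ B → (bx + d, by') ∈ B → (tx, ty) ∈ B →
    (tx + d, ty) ∈ B → ((bx + tx) / 2 + s - d / 2, (by' + ty) / 2) ∈ B →
    ((bx + tx) / 2 + s + 3 * d / 2, (by' + ty) / 2) ∈ B → d * (ty - by') ≤ 4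

lemma NP.reflx {B : Set (ℝ × ℝ)} (h : NP B) : NP {q | (-q.1, q.2) ∈ B} where
  cv := by
    have : {q : ℝ × ℝ | (-q.1, q.2) ∈ B} =
        (LinearMap.prodMap (-LinearMap.id) LinearMap.id : ℝ × ℝ →ₗ[ℝ] ℝ × ℝ) ⁻¹' B := by
      ext q; simp
    rw [this]; exact h.cv.linear_preimage _
  v0 := h.v5
  v1 := h.v4
  v2 := h.v3
  v3 := by simpa using h.v2
  v4 := by simpa using h.v1
  v5 := by simpa using h.v0
  opt := by
    intro bx by' tx ty d s hd h1 h2 h3 h4 h5 h6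
    simp only [Set.mem_ofPred_eq] at h1 h2 h3 h4 h5 h6
    refine h.opt (-(bx + d)) by' (-(tx + d)) ty d (-s) hd h2 ?_ h4 ?_ ?_ ?_
    · convert h1 using 2; ring
    · convert h3 using 2; ring
    · convert h6 using 2; ring
    · convert h5 using 2; ring

lemma NP.refly {B : Set (ℝ × ℝ)} (h : NP B) : NP {q | (q.1, 4 - q.2) ∈ B} where
  cv := by
    intro p hp q hq a b ha hb hab
    simp only [Set.mem_ofPred_eq] at *
    convert h.cv hp hq ha hb hab using 1
    ext
    · simp
    · simp; linear_combination -4 * hab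
  v0 := by simp only [Set.mem_ofPred_eq]; norm_num; exact h.v2
  v1 := by simp only [Set.mem_ofPred_eq]; norm_num; exact h.v1
  v2 := by simp only [Set.mem_ofPred_eq]; norm_num; exact h.v0
  v3 := by simp only [Set.mem_ofPred_eq]; norm_num; exact h.v5
  v4 := by simp only [Set.mem_ofPred_eq]; norm_num; exact h.v4
  v5 := by simp only [Set.mem_ofPred_eq]; norm_num; exact h.v3
  opt := by
    intro bx by' tx ty d s hd h1 h2 h3 h4 h5 h6
    simp only [Set.mem_ofPred_eq] at h1 h2 h3 h4 h5 h6
    have := h.opt tx (4 - ty) bx (4 - by') d s hd h3 h4 h1 h2 ?_ ?_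
    · linarith
    · convert h5 using 2 <;> ring
    · convert h6 using 2 <;> ring

lemma NP.star0 {B : Set (ℝ × ℝ)} (h : NP B) {x y : ℝ} (hp : (x, y) ∈ B) (h1 : y < 1)
    (h2 : y < x) : False := by
  obtain ⟨β, hβ⟩ : ∃ β, β = 1 - y := ⟨_, rfl⟩
  obtain ⟨δ, hδ⟩ : ∃ δ, δ = (x - y) / (1 + β) := ⟨_, rfl⟩
  have b0 : 0 < β := by linarith
  have d0 : 0 < δ := by rw [hδ]; apply div_pos <;> linarith
  have hq : (1 + δ, (1:ℝ)) ∈ B := by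
    refine seg h.cv hp h.v1 (β / (1 + β)) (by positivity)
      ((div_le_one (by positivity)).2 (by linarith)) ?_ ?_
    · rw [hδ]; field_simp; rw [hβ]; ring
    · field_simp; rw [hβ]; ring
  obtain ⟨τ, hτ⟩ : ∃ τ, τ = δ / ((2 + δ) * (1 + β)) := ⟨_, rfl⟩
  have t0 : 0 < τ := by rw [hτ]; positivity
  have tm : τ * ((2 + δ) * (1 + β)) = δ := by rw [hτ]; field_simp
  have t2 : (2 + δ) * τ ≤ δ := by nlinarith [mul_pos (mul_pos t0 d0) b0, mul_pos t0 b0]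
  have t1 : τ < 1 := by nlinarith
  have e1 : τ * β < 1 := by nlinarith [mul_pos (mul_pos t0 d0) b0, mul_pos t0 b0, mul_pos t0 d0]
  have e0 : 0 < τ * β := by positivity
  obtain ⟨ε, hε⟩ : ∃ ε, ε = τ * β := ⟨_, rfl⟩
  rw [← hε] at e1 e0
  have hb1 : (x + (1 - τ) * (-1 - x), 1 - ε) ∈ B := by
    refine seg h.cv hp h.v5 (1 - τ) (by linarith) (by linarith) rfl ?_
    rw [hε, hβ]; ring
  have hb2 : (x + (1 - τ) * (1 + δ - x), 1 - ε) ∈ B := by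
    refine seg h.cv hp hq (1 - τ) (by linarith) (by linarith) rfl ?_
    rw [hε, hβ]; ring
  have := h.opt (x + (1 - τ) * (-1 - x)) (1 - ε) (-1) 3 (2 - ε / 2)
    (-2 + ε / 2 + (2 - ε / 2) / 2 - ((x + (1 - τ) * (-1 - x)) + -1) / 2) (by linarith) hb1
    (hseg h.cv hb1 hb2 (by linarith) (by nlinarith)) h.v3
    (hseg h.cv h.v3 h.v2 (by linarith) (by linarith))
    (seg h.cv h.v4 h.v5 (ε / 2) (by linarith) (by linarith) (by ring) (by ring))
    (seg h.cv h.v1 h.v0 (ε / 2) (by linarith) (by linarith) (by ring) (by ring))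
  nlinarith

lemma NP.tip {B : Set (ℝ × ℝ)} (h : NP B) {δ : ℝ} (d0 : 0 < δ) (hp : (2 + δ, 2) ∈ B) : False := by
  obtain ⟨ε, hε⟩ : ∃ ε, ε = δ / (4 + 2 * δ) := ⟨_, rfl⟩
  have e0 : 0 < ε := by rw [hε]; positivity
  have em : ε * (4 + 2 * δ) = δ := by rw [hε]; field_simp
  have e1 : ε < 1 := by nlinarith
  have l1 : (-1 - ε, 1 + ε) ∈ B :=
    seg h.cv h.v5 h.v4 ε e0.le e1.le (by ring) (by ring)
  have l3 : (-1 - ε, 3 - ε) ∈ B :=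
    seg h.cv h.v3 h.v4 ε e0.le e1.le (by ring) (by ring)
  have := h.opt (-1 - ε) (1 + ε) (-1 - ε) (3 - ε) (2 + 2 * ε + ε * δ)
    (-2 + (2 + 2 * ε + ε * δ) / 2 + 1 + ε) (by positivity) l1
    (seg h.cv h.v0 hp ε e0.le e1.le (by ring) (by ring)) l3
    (seg h.cv h.v2 hp ε e0.le e1.le (by ring) (by ring))
    (by convert h.v4 using 2 <;> ring)
    (hseg h.cv (x1 := -2) (x2 := 2 + δ) (by convert h.v4 using 2; ring)
      (by convert hp using 2; ring) (by nlinarith) (by nlinarith))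
  nlinarith [mul_pos e0 d0]

lemma NP.star1' {B : Set (ℝ × ℝ)} (h : NP B) {x y : ℝ} (hp : (x, y) ∈ B) (h1 : y < x)
    (h2 : 2 ≤ y) : False := by
  have hy : 0 < y - 1 := by linarith
  refine h.tip (δ := (x - y) / (y - 1)) (div_pos (by linarith) hy) ?_
  refine seg h.cv h.v0 hp (1 / (y - 1)) (by positivity) ((div_le_one hy).2 (by linarith)) ?_ ?_
  · field_simp; ring
  · field_simp; ring

lemma NP.star1 {B : Set (ℝ × ℝ)} (h : NP B) {x y : ℝ} (hp : (x, y) ∈ B) (h1 : y < x)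
    (h2 : 4 < x + y) : False := by
  rcases le_total 2 y with hy | hy
  · exact h.star1' hp h1 hy
  · refine h.refly.star1' (x := x) (y := 4 - y) ?_ (by linarith) (by linarith)
    simpa using hp

noncomputable def ee (j : Fin 6) (p : ℝ × ℝ) : ℝ :=
  ![1 - p.2, (p.1 - p.2) / 2, (p.1 + p.2 - 4) / 2, p.2 - 3, (p.2 - p.1 - 4) / 2, (-p.1 - p.2) / 2] j

noncomputable def VV : Fin 6 → ℝ × ℝ := ![(1,1), (2,2), (1,3), (-1,3), (-2,2), (-1,1)]

structure SH (B : Set (ℝ × ℝ)) : Prop where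
  cv : Convex ℝ B
  cp : IsCompact B
  v : ∀ j, VV j ∈ B
  st : ∀ p ∈ B, ∀ j, 0 < ee j p → 0 < ee (j + 1) p → False

lemma NP.sh {B : Set (ℝ × ℝ)} (h : NP B) (hc : IsCompact B) : SH B where
  cv := h.cv
  cp := hc
  v := by
    intro j
    fin_cases j
    exacts [h.v0, h.v1, h.v2, h.v3, h.v4, h.v5]
  st := by
    rintro ⟨x, y⟩ hp j h1 h2
    fin_cases j <;> simp [ee] at h1 h2
    · exact h.star0 hp h1 h2
    · exact h.star1 hp h1 h2
    · exact h.refly.star0 (x := x) (y := 4 - y) (by simpa using hp) (by linarith) (by linarith)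
    · exact h.refly.reflx.star0 (x := -x) (y := 4 - y) (by simpa using hp) (by linarith) (by linarith)
    · exact h.reflx.star1 (x := -x) (y := y) (by simpa using hp) (by linarith) (by linarith)
    · exact h.reflx.star0 (x := -x) (y := y) (by simpa using hp) (by linarith) (by linarith)

lemma aff (a b c d e f : ℝ) (h : a * d - b * c ≠ 0) : ∃ S : ℝ × ℝ ≃ᵃ[ℝ] ℝ × ℝ,
    ∀ x y, S (x, y) = (a * x + b * y + e, c * x + d * y + f) := by
  let Lq : (ℝ × ℝ) ≃ₗ[ℝ] (ℝ × ℝ) :=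
    { toFun := fun p => (a * p.1 + b * p.2, c * p.1 + d * p.2)
      invFun := fun p => ((d * p.1 - b * p.2) / (a * d - b * c), (a * p.2 - c * p.1) / (a * d - b * c))
      map_add' := by intro p q; ext <;> simp <;> ring
      map_smul' := by intro m p; ext <;> simp <;> ring
      left_inv := by
        intro p
        ext
        · simp only; rw [div_eq_iff h]; ring
        · simp only; rw [div_eq_iff h]; ring
      right_inv := by
        intro p
        ext
        · simp only; rw [mul_div_assoc', mul_div_assoc', ← add_div, div_eq_iff h]; ring
        · simp only; rw [mul_div_assoc', mul_div_assoc', ← add_div, div_eq_iff h]; ring }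
  refine ⟨Lq.toAffineEquiv.trans (AffineEquiv.constVAdd ℝ (ℝ × ℝ) (e, f)), fun x y => ?_⟩
  simp [Lq]
  constructor <;> ring

lemma sh_image {A : Set (ℝ × ℝ)} (hA : IsConvexBody A) :
    ∃ T : ℝ × ℝ ≃ᵃ[ℝ] ℝ × ℝ, SH (T '' A) := by
  obtain ⟨θ, ⟨⟨bx, by'⟩, ⟨tx, ty⟩, d, s⟩, ho, hs⟩ := opt_zero hA
  obtain ⟨hd, hH⟩ := opt_pos hA ho
  simp only at hs hd
  subst hs
  have hst := opt_strong hA ho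
  have hf := ho.1.2
  have f0 := hf 0
  have f1 := hf 1
  have f2 := hf 2
  have f3 := hf 3
  have f4 := hf 4
  have f5 := hf 5
  simp [PP, al, be, ga, uu] at f0 f1 f2 f3 f4 f5
  simp only [HH] at hH
  obtain ⟨C, hC⟩ : ∃ C, C = Real.cos θ := ⟨_, rfl⟩
  obtain ⟨Sn, hSn⟩ : ∃ Sn, Sn = Real.sin θ := ⟨_, rfl⟩
  rw [← hC, ← hSn] at f1 f3 f4 f5 hH
  obtain ⟨S, hS⟩ := aff (d / 2 * C) ((tx - bx) / 2) (d / 2 * Sn) ((ty - by') / 2)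
    ((bx + tx) / 2 + d / 2 * C - (tx - bx)) ((by' + ty) / 2 + d / 2 * Sn - (ty - by')) (by
      have := mul_pos hd hH
      nlinarith)
  have hpre : S.symm '' A = S ⁻¹' A := by
    ext q
    constructor
    · rintro ⟨p, hp, rfl⟩; simpa using hp
    · intro hq; exact ⟨S q, hq, by simp⟩
  refine ⟨S.symm, NP.sh ?_ ?_⟩
  · rw [hpre]
    refine ⟨hA.1.affine_preimage S.toAffineMap, ?_, ?_, ?_, ?_, ?_, ?_, ?_⟩
    · rw [Set.mem_preimage, hS]; convert f1 using 2 <;> ring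
    · rw [Set.mem_preimage, hS]; convert f5 using 2 <;> ring
    · rw [Set.mem_preimage, hS]; convert f3 using 2 <;> ring
    · rw [Set.mem_preimage, hS]; convert f2 using 2 <;> ring
    · rw [Set.mem_preimage, hS]; convert f4 using 2 <;> ring
    · rw [Set.mem_preimage, hS]; convert f0 using 2 <;> ring
    · intro b1 b2 t1 t2 d' s' hd' h0 h1 h2 h3 h4 h5
      rw [Set.mem_preimage, hS] at h0 h1 h2 h3 h4 h5
      have := hst (S (b1, b2), S (t1, t2), d' * (d / 2), s' * (d / 2)) ⟨by simp only; positivity, ?_⟩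
      · simp only [FF, HH, hS, ← hC, ← hSn] at this
        have e : d' * (d / 2) * (C * (d / 2 * Sn * t1 + (ty - by') / 2 * t2 + ((by' + ty) / 2 + d / 2 * Sn - (ty - by')) -
            (d / 2 * Sn * b1 + (ty - by') / 2 * b2 + ((by' + ty) / 2 + d / 2 * Sn - (ty - by')))) -
          Sn * (d / 2 * C * t1 + (tx - bx) / 2 * t2 + ((bx + tx) / 2 + d / 2 * C - (tx - bx)) -
            (d / 2 * C * b1 + (tx - bx) / 2 * b2 + ((bx + tx) / 2 + d / 2 * C - (tx - bx))))) =
          (d' * (t2 - b2)) / 4 * (d * (C * (ty - by') - Sn * (tx - bx))) := by ring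
        rw [e] at this
        have hp := mul_pos hd hH
        have := le_of_mul_le_mul_right (this.trans_eq (one_mul _).symm) hp
        linarith
      · intro k
        fin_cases k <;> simp [PP, al, be, ga, uu, hS, ← hC, ← hSn]
        · exact h0
        · convert h1 using 2 <;> ring
        · exact h2
        · convert h3 using 2 <;> ring
        · convert h4 using 2 <;> ring
        · convert h5 using 2 <;> ring
  · exact hA.2.1.image S.symm.toAffineMap.continuous_of_finiteDimensional

def Dom (B : Set (ℝ × ℝ)) (k : Fin 6) : Prop := ∃ p ∈ B, ∀ q ∈ B, ∀ j, ee j q ≤ ee k p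

lemma rot : ∃ R : ℝ × ℝ ≃ᵃ[ℝ] ℝ × ℝ, ∀ B, SH B → SH (R '' B) ∧ ∀ k, Dom B k → Dom (R '' B) (k + 1) := by
  obtain ⟨R, hR⟩ := aff (1/2) (-3/2) (1/2) (1/2) 3 1 (by norm_num)
  have he : ∀ j p, ee (j + 1) (R p) = ee j p := by
    rintro j ⟨x, y⟩
    rw [hR]
    fin_cases j <;> simp [ee] <;> ring
  have hv : ∀ j, R (VV j) = VV (j + 1) := by
    intro j
    fin_cases j <;> simp [VV, hR] <;> norm_num
  refine ⟨R, fun B h => ⟨⟨?_, ?_, ?_, ?_⟩, ?_⟩⟩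
  · exact h.cv.affine_image R.toAffineMap
  · exact h.cp.image R.toAffineMap.continuous_of_finiteDimensional
  · intro j
    have := hv (j - 1)
    rw [sub_add_cancel] at this
    rw [← this]; exact ⟨_, h.v _, rfl⟩
  · rintro _ ⟨p, hp, rfl⟩ j h1 h2
    have e1 := he (j - 1) p
    rw [sub_add_cancel] at e1
    rw [he] at h2
    rw [e1] at h1
    exact h.st p hp (j - 1) h1 (by rwa [sub_add_cancel])
  · rintro k ⟨p, hp, hm⟩
    refine ⟨R p, ⟨p, hp, rfl⟩, ?_⟩
    rintro _ ⟨q, hq, rfl⟩ j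
    have e1 := he (j - 1) q
    rw [sub_add_cancel] at e1
    rw [e1, he]
    exact hm q hq _

lemma rot_iter (n : ℕ) {B : Set (ℝ × ℝ)} (h : SH B) {k : Fin 6} (hk : Dom B k) :
    ∃ T : ℝ × ℝ ≃ᵃ[ℝ] ℝ × ℝ, SH (T '' B) ∧ Dom (T '' B) (k + n • (1 : Fin 6)) := by
  induction n with
  | zero => exact ⟨AffineEquiv.refl ℝ _, by simpa using h, by simpa using hk⟩
  | succ n ih =>
    obtain ⟨T, h1, h2⟩ := ih
    obtain ⟨R, hR⟩ := rot
    refine ⟨T.trans R, ?_⟩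
    have : (T.trans R) '' B = R '' (T '' B) := by
      rw [Set.image_image]; rfl
    rw [this]
    refine ⟨(hR _ h1).1, ?_⟩
    have := (hR _ h1).2 _ h2
    rwa [succ_nsmul, ← add_assoc]

lemma dom_exists {B : Set (ℝ × ℝ)} (h : SH B) : ∃ k, Dom B k := by
  have hk : ∀ j, ∃ p ∈ B, ∀ q ∈ B, ee j q ≤ ee j p := by
    intro j
    obtain ⟨p, hp, hm⟩ := h.cp.exists_isMaxOn ⟨_, h.v 0⟩ (f := ee j) (by
      apply Continuous.continuousOn
      unfold ee
      fin_cases j <;> simp <;> fun_prop)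
    exact ⟨p, hp, fun q hq => hm hq⟩
  choose P hP hm using hk
  obtain ⟨k, hk⟩ := Finite.exists_max (fun j => ee j (P j))
  exact ⟨k, P k, hP k, fun q hq j => (hm j q hq).trans (hk j)⟩

lemma chain {V : Set (ℝ × ℝ)} (hV : Convex ℝ V) {x1 y1 x2 y2 x y : ℝ} (h1 : (x1, y1) ∈ V)
    (h1' : (-x1, y1) ∈ V) (h2 : (x2, y2) ∈ V) (h2' : (-x2, y2) ∈ V) (hlt : y1 < y2)
    (a1 : y1 ≤ y) (a2 : y ≤ y2) (hx : x * (y2 - y1) ≤ x1 * (y2 - y) + x2 * (y - y1))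
    (hx' : -x * (y2 - y1) ≤ x1 * (y2 - y) + x2 * (y - y1)) : (x, y) ∈ V := by
  have hp : 0 < y2 - y1 := by linarith
  have l0 : 0 ≤ (y - y1) / (y2 - y1) := div_nonneg (by linarith) hp.le
  have l1 : (y - y1) / (y2 - y1) ≤ 1 := (div_le_one hp).2 (by linarith)
  have ey : y = y1 + (y - y1) / (y2 - y1) * (y2 - y1) := by field_simp; ring
  have r1 := seg hV h1 h2 _ l0 l1 rfl ey
  have r2 := seg hV h1' h2' _ l0 l1 rfl ey
  have ex : x1 + (y - y1) / (y2 - y1) * (x2 - x1) = (x1 * (y2 - y) + x2 * (y - y1)) / (y2 - y1) := by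
    field_simp; ring
  have ex' : -x1 + (y - y1) / (y2 - y1) * (-x2 - -x1) =
      -((x1 * (y2 - y) + x2 * (y - y1)) / (y2 - y1)) := by
    field_simp; ring
  rw [ex] at r1
  rw [ex'] at r2
  refine hseg hV r2 r1 ?_ ?_
  · rw [neg_le, le_div_iff₀ hp]; exact hx'
  · rw [le_div_iff₀ hp]; exact hx

lemma corner {B : Set (ℝ × ℝ)} (hB : Convex ℝ B) (st : ∀ x y, (x, y) ∈ B → y < 1 → x ≤ y)
    {X x0 a : ℝ} (hX : 1 < X) (h1 : (X, (1:ℝ)) ∈ B) (h0 : (x0, a) ∈ B) (ha : a < 1) : False := by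
  have hx0 := st _ _ h0 ha
  obtain ⟨τ, hτ⟩ : ∃ τ, τ = (X - 1) / (2 * (X - 1 + (a - x0))) := ⟨_, rfl⟩
  have hden : 0 < 2 * (X - 1 + (a - x0)) := by linarith
  have t0 : 0 < τ := by rw [hτ]; apply div_pos <;> linarith
  have tm : τ * (2 * (X - 1 + (a - x0))) = X - 1 := by rw [hτ]; exact div_mul_cancel₀ _ hden.ne'
  have t1 : τ ≤ 1 := by rw [hτ, div_le_one hden]; linarith
  have := st _ _ (seg hB h1 h0 τ t0.le t1 rfl rfl) (by nlinarith)
  nlinarith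

lemma cross {B : Set (ℝ × ℝ)} (hB : Convex ℝ B) (st : ∀ x y, (x, y) ∈ B → y < 1 → x ≤ y)
    {x y x0 a : ℝ} (h1 : (x, y) ∈ B) (h0 : (x0, a) ∈ B) (ha : a < 1) (hx0 : -a ≤ x0)
    (hy : 1 ≤ y) : (1 - a) * (x - 1) ≤ (1 + a) * (y - 1) := by
  by_contra hcon
  push Not at hcon
  have hya : 0 < y - a := by linarith
  have l1 : (1 - a) / (y - a) ≤ 1 := (div_le_one hya).2 (by linarith)
  have l0 : 0 ≤ (1 - a) / (y - a) := div_nonneg (by linarith) hya.le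
  refine corner hB st (X := x0 + (1 - a) / (y - a) * (x - x0)) ?_
    (seg hB h0 h1 _ l0 l1 rfl (by field_simp; ring)) h0 ha
  have : x0 + (1 - a) / (y - a) * (x - x0) = (x0 * (y - a) + (1 - a) * (x - x0)) / (y - a) := by
    field_simp
  rw [this, lt_div_iff₀ hya]
  nlinarith

set_option maxHeartbeats 2000000 in
lemma final {B : Set (ℝ × ℝ)} (h : SH B) (hd : Dom B 0) :
    ∃ a : ℝ, a ∈ Set.Icc (0:ℝ) 1 ∧ L a ⊆ B ∧ B ⊆ U a := by
  obtain ⟨⟨x0, a⟩, h0, hm⟩ := hd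
  have ha1 : a ≤ 1 := by
    have := hm _ (h.v 0) 0
    simp [ee, VV] at this
    exact this
  have s0 : ∀ x y, (x, y) ∈ B → y < 1 → x ≤ y := by
    intro x y hp hy
    by_contra! hc
    exact h.st _ hp 0 (by simp [ee]; linarith) (by simp [ee]; linarith)
  have s1 : ∀ x y, (x, y) ∈ B → y < x → x + y ≤ 4 := by
    intro x y hp hy
    by_contra! hc
    exact h.st _ hp 1 (by simp [ee]; linarith) (by simp [ee]; linarith)
  have s2 : ∀ x y, (x, y) ∈ B → 3 < y → x + y ≤ 4 := by
    intro x y hp hy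
    by_contra! hc
    exact h.st _ hp 2 (by simp [ee]; linarith) (by simp [ee]; linarith)
  have s3 : ∀ x y, (x, y) ∈ B → 3 < y → -x + y ≤ 4 := by
    intro x y hp hy
    by_contra! hc
    exact h.st _ hp 3 (by simp [ee]; linarith) (by simp [ee]; linarith)
  have s4 : ∀ x y, (x, y) ∈ B → y < -x → -x + y ≤ 4 := by
    intro x y hp hy
    by_contra! hc
    exact h.st _ hp 4 (by simp [ee]; linarith) (by simp [ee]; linarith)
  have s5 : ∀ x y, (x, y) ∈ B → y < 1 → -x ≤ y := by
    intro x y hp hy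
    by_contra! hc
    exact h.st _ hp 5 (by simp [ee]; linarith) (by simp [ee]; linarith)
  have v0 : ((1:ℝ), (1:ℝ)) ∈ B := h.v 0
  have v1 : ((2:ℝ), (2:ℝ)) ∈ B := h.v 1
  have v2 : ((1:ℝ), (3:ℝ)) ∈ B := h.v 2
  have v3 : ((-1:ℝ), (3:ℝ)) ∈ B := h.v 3
  have v4 : ((-2:ℝ), (2:ℝ)) ∈ B := h.v 4
  have v5 : ((-1:ℝ), (1:ℝ)) ∈ B := h.v 5
  have ha0 : 0 ≤ a := by
    rcases ha1.eq_or_lt with e | e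
    · linarith
    · linarith [s0 _ _ h0 e, s5 _ _ h0 e]
  refine ⟨a, ⟨ha0, ha1⟩, ?_, ?_⟩
  · have vm : ((0:ℝ), (1:ℝ)) ∈ B := hseg h.cv v5 v0 (by norm_num) (by norm_num)
    refine convexHull_min ?_ h.cv
    rintro p (rfl | rfl | rfl | rfl | rfl | rfl | rfl)
    · rcases ha1.eq_or_lt with e | e
      · subst e; convert vm using 2; norm_num
      · have q1 := s0 _ _ h0 e
        have q2 := s5 _ _ h0 e
        have hb : 2 * a / (1 + a) ≤ 1 := (div_le_one (by linarith)).2 (by linarith)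
        rcases le_total x0 0 with hx | hx
        · have hp : 0 < 1 - x0 := by linarith
          refine vseg h.cv (y1 := (a - x0) / (1 - x0)) (seg h.cv h0 v0 (-x0 / (1 - x0))
            (div_nonneg (by linarith) hp.le) ((div_le_one hp).2 (by linarith)) ?_ ?_) vm ?_ hb
          · field_simp; ring
          · field_simp; ring
          · rw [div_le_div_iff₀ hp (by linarith)]; nlinarith
        · have hp : 0 < 1 + x0 := by linarith
          refine vseg h.cv (y1 := (a + x0) / (1 + x0)) (seg h.cv h0 v5 (x0 / (1 + x0))
            (div_nonneg (by linarith) hp.le) ((div_le_one hp).2 (by linarith)) ?_ ?_) vm ?_ hb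
          · field_simp; ring
          · field_simp; ring
          · rw [div_le_div_iff₀ hp (by linarith)]; nlinarith
    all_goals assumption
  · rintro ⟨x, y⟩ hp
    have t0 := hm _ hp 0
    have t1 := hm _ hp 1
    have t2 := hm _ hp 2
    have t3 := hm _ hp 3
    have t4 := hm _ hp 4
    have t5 := hm _ hp 5
    simp [ee] at t0 t1 t2 t3 t4 t5
    have w0 := s0 _ _ hp
    have w1 := s1 _ _ hp
    have w2 := s2 _ _ hp
    have w3 := s3 _ _ hp
    have w4 := s4 _ _ hp
    have w5 := s5 _ _ hp
    unfold U
    split_ifs with hlt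
    · have hcr : 1 ≤ y → (1 - a) * (x - 1) ≤ (1 + a) * (y - 1) := fun hy =>
        cross h.cv s0 hp h0 (by linarith) (by linarith [s5 _ _ h0 (by linarith)]) hy
      have hcl : 1 ≤ y → (1 - a) * (-x - 1) ≤ (1 + a) * (y - 1) := by
        intro hy
        have hcv : Convex ℝ {q : ℝ × ℝ | (-q.1, q.2) ∈ B} := by
          have : {q : ℝ × ℝ | (-q.1, q.2) ∈ B} =
              (LinearMap.prodMap (-LinearMap.id) LinearMap.id : ℝ × ℝ →ₗ[ℝ] ℝ × ℝ) ⁻¹' B := by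
            ext q; simp
          rw [this]; exact h.cv.linear_preimage _
        refine cross hcv (fun x y h1 h2 => ?_) (x0 := -x0) (by simpa using hp) (by simpa using h0)
          (by linarith) (by linarith [s0 _ _ h0 (by linarith)]) hy
        have := s5 _ _ h1 h2
        simpa using this
      by_cases c1 : y ≤ 2 - a
      · apply chain (convex_convexHull ℝ _) (x1 := a) (y1 := a) (x2 := 2 + a) (y2 := 2 - a)
          (subset_convexHull ℝ _ (by simp)) (subset_convexHull ℝ _ (by simp))
          (subset_convexHull ℝ _ (by simp)) (subset_convexHull ℝ _ (by simp))
        · linarith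
        · linarith
        · linarith
        · by_cases hy : y < 1
          · nlinarith [w0 hy]
          · nlinarith [hcr (by linarith)]
        · by_cases hy : y < 1
          · nlinarith [w5 hy]
          · nlinarith [hcl (by linarith)]
      by_cases c2 : y ≤ 3 - a
      · apply chain (convex_convexHull ℝ _) (x1 := 2 + a) (y1 := 2 - a) (x2 := 3 - a) (y2 := 3 - a)
          (subset_convexHull ℝ _ (by simp)) (subset_convexHull ℝ _ (by simp))
          (subset_convexHull ℝ _ (by simp)) (subset_convexHull ℝ _ (by simp))
        · linarith
        · linarith
        · linarith
        · by_cases hy : y < x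
          · nlinarith [w1 hy]
          · nlinarith
        · by_cases hy : y < -x
          · nlinarith [w4 hy]
          · nlinarith
      by_cases c3 : y ≤ 3
      · apply chain (convex_convexHull ℝ _) (x1 := 3 - a) (y1 := 3 - a) (x2 := 3 - 2 * a) (y2 := 3)
          (subset_convexHull ℝ _ (by simp)) (subset_convexHull ℝ _ (by simp))
          (subset_convexHull ℝ _ (by simp)) (subset_convexHull ℝ _ (by simp))
        · linarith
        · linarith
        · linarith
        · nlinarith
        · nlinarith
      · have z1 := w2 (by linarith)
        have z2 := w3 (by linarith)
        apply chain (convex_convexHull ℝ _) (x1 := 3 - 2 * a) (y1 := 3) (x2 := a) (y2 := 4 - a)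
          (subset_convexHull ℝ _ (by simp)) (subset_convexHull ℝ _ (by simp))
          (subset_convexHull ℝ _ (by simp)) (subset_convexHull ℝ _ (by simp))
        · linarith
        · linarith
        · linarith
        · nlinarith
        · nlinarith
    · by_cases c1 : y < 1
      · have z1 := w0 c1
        have z2 := w5 c1
        apply chain (convex_convexHull ℝ _) (x1 := a) (y1 := a) (x2 := 3 - 2 * a) (y2 := 1)
          (subset_convexHull ℝ _ (by simp)) (subset_convexHull ℝ _ (by simp))
          (subset_convexHull ℝ _ (by simp)) (subset_convexHull ℝ _ (by simp))
        · linarith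
        · linarith
        · linarith
        · nlinarith
        · nlinarith
      by_cases c2 : y ≤ 1 + a
      · apply chain (convex_convexHull ℝ _) (x1 := 3 - 2 * a) (y1 := 1) (x2 := 3 - a) (y2 := 1 + a)
          (subset_convexHull ℝ _ (by simp)) (subset_convexHull ℝ _ (by simp))
          (subset_convexHull ℝ _ (by simp)) (subset_convexHull ℝ _ (by simp))
        · linarith
        · linarith
        · linarith
        · nlinarith
        · nlinarith
      by_cases c3 : y ≤ 3 - a
      · apply chain (convex_convexHull ℝ _) (x1 := 3 - a) (y1 := 1 + a) (x2 := 3 - a) (y2 := 3 - a)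
          (subset_convexHull ℝ _ (by simp)) (subset_convexHull ℝ _ (by simp))
          (subset_convexHull ℝ _ (by simp)) (subset_convexHull ℝ _ (by simp))
        · linarith
        · linarith
        · linarith
        · have : x ≤ 3 - a := by
            by_cases hy : y < x
            · linarith [w1 hy]
            · linarith
          nlinarith
        · have : -x ≤ 3 - a := by
            by_cases hy : y < -x
            · linarith [w4 hy]
            · linarith
          nlinarith
      by_cases c4 : y ≤ 3
      · apply chain (convex_convexHull ℝ _) (x1 := 3 - a) (y1 := 3 - a) (x2 := 3 - 2 * a) (y2 := 3)
          (subset_convexHull ℝ _ (by simp)) (subset_convexHull ℝ _ (by simp))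
          (subset_convexHull ℝ _ (by simp)) (subset_convexHull ℝ _ (by simp))
        · linarith
        · linarith
        · linarith
        · nlinarith
        · nlinarith
      · have z1 := w2 (by linarith)
        have z2 := w3 (by linarith)
        apply chain (convex_convexHull ℝ _) (x1 := 3 - 2 * a) (y1 := 3) (x2 := a) (y2 := 4 - a)
          (subset_convexHull ℝ _ (by simp)) (subset_convexHull ℝ _ (by simp))
          (subset_convexHull ℝ _ (by simp)) (subset_convexHull ℝ _ (by simp))
        · linarith
        · linarith
        · linarith
        · nlinarith
        · nlinarith

theorem stmt_2 (A : Set (ℝ × ℝ)) (hA : IsConvexBody A) :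
    ∃ (a : ℝ) (T : ℝ × ℝ ≃ᵃ[ℝ] ℝ × ℝ),
      a ∈ Set.Icc (0 : ℝ) 1 ∧ L a ⊆ T '' A ∧ T '' A ⊆ U a := by
  obtain ⟨T, hT⟩ := sh_image hA
  obtain ⟨k, hk⟩ := dom_exists hT
  obtain ⟨R, h1, h2⟩ := rot_iter (6 - k.val) hT hk
  have e : k + (6 - k.val) • (1 : Fin 6) = 0 := by
    clear hk h2; revert k; decide
  rw [e] at h2
  obtain ⟨a, ha, hL, hU⟩ := final h1 h2
  have : (T.trans R) '' A = R '' (T '' A) := by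
    rw [Set.image_image]; rfl
  exact ⟨a, T.trans R, ha, by rwa [this], by rwa [this]⟩
end

section
/- Let a ∈ [0,1], b ∈ [1/2,1], and let h be the homothety of ℝ² with center (0,2) and ratio 2 − b. Then U_b ⊆ h(L_a). -/
theorem conv_aux {S : Set (ℝ × ℝ)} (hS : Convex ℝ S) (s x y : ℝ) (hs0 : 0 ≤ s) (hs1 : s ≤ 1)
    (hx : |x| ≤ 2 - s) (e : ℝ) (hy : y = e * s + 2)
    (p1 : ((2 : ℝ), (2 : ℝ)) ∈ S) (p2 : ((-2 : ℝ), (2 : ℝ)) ∈ S)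
    (p3 : ((1 : ℝ), 2 + e) ∈ S) (p4 : ((-1 : ℝ), 2 + e) ∈ S) : (x, y) ∈ S := by
  have h2 : 0 < 2 - s := by linarith
  obtain ⟨hx1, hx2⟩ := abs_le.mp hx
  have q1 := hS p1 p3 (sub_nonneg.mpr hs1) hs0 (by ring)
  have q2 := hS p2 p4 (sub_nonneg.mpr hs1) hs0 (by ring)
  have q := hS q1 q2 (a := (2 - s + x) / (2 * (2 - s))) (b := (2 - s - x) / (2 * (2 - s)))
    (div_nonneg (by linarith) (by linarith)) (div_nonneg (by linarith) (by linarith))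
    (by field_simp; ring)
  convert q using 1
  simp only [Prod.smul_mk, Prod.mk_add_mk, smul_eq_mul, Prod.mk.injEq]
  subst hy
  constructor <;> field_simp <;> ring

theorem hex_mem (a x y : ℝ) (h1 : |y| ≤ 1) (h2 : |x| + |y| ≤ 2) : (x, y + 2) ∈ L a := by
  have hS : Convex ℝ (L a) := convex_convexHull ℝ _
  have sub := subset_convexHull ℝ ({((0 : ℝ), 2 * a / (1 + a)), (1, 1), (-1, 1), (2, 2), (-2, 2),
    (1, 3), (-1, 3)} : Set (ℝ × ℝ))
  rcases le_total 0 y with h | h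
  · refine conv_aux hS |y| x _ (abs_nonneg y) h1 (by linarith) 1 (by rw [abs_of_nonneg h]; ring)
      ?_ ?_ ?_ ?_ <;> apply sub <;> norm_num
  · refine conv_aux hS |y| x _ (abs_nonneg y) h1 (by linarith) (-1) (by rw [abs_of_nonpos h]; ring)
      ?_ ?_ ?_ ?_ <;> apply sub <;> norm_num

theorem stmt_3 (a b : ℝ) (ha : a ∈ Set.Icc (0 : ℝ) 1) (hb : b ∈ Set.Icc (1 / 2 : ℝ) 1) :
    U b ⊆ AffineMap.homothety ((0 : ℝ), (2 : ℝ)) (2 - b) '' L a := by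
  obtain ⟨hb1, hb2⟩ := hb
  have hl : (0 : ℝ) < 2 - b := by linarith
  have key : ∀ x y : ℝ, |y - 2| ≤ 2 - b → |x| + |y - 2| ≤ 2 * (2 - b) →
      (x, y) ∈ AffineMap.homothety ((0 : ℝ), (2 : ℝ)) (2 - b) '' L a := by
    intro x y h1 h2
    refine ⟨(x / (2 - b), (y - 2) / (2 - b) + 2), hex_mem a _ _ ?_ ?_, ?_⟩
    · rw [abs_div, abs_of_pos hl, div_le_one hl]; exact h1
    · rw [abs_div, abs_div, abs_of_pos hl, ← add_div, div_le_iff₀ hl]; exact h2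
    · simp only [AffineMap.homothety_apply, vsub_eq_sub, vadd_eq_add, Prod.mk_sub_mk,
        Prod.smul_mk, Prod.mk_add_mk, smul_eq_mul, Prod.mk.injEq]
      constructor <;> field_simp <;> ring
  have hc : Convex ℝ (AffineMap.homothety ((0 : ℝ), (2 : ℝ)) (2 - b) '' L a) :=
    (convex_convexHull ℝ _).affine_image _
  rw [U, if_neg (not_lt.mpr hb1)]
  refine convexHull_min ?_ hc
  intro p hp
  simp only [Set.mem_insert_iff, Set.mem_singleton_iff] at hp
  rcases hp with rfl | rfl | rfl | rfl | rfl | rfl | rfl | rfl | rfl | rfl | rfl | rfl <;>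
    apply key <;> (try simp only [abs_neg]) <;>
    first
    | (rw [abs_le]; constructor <;> linarith)
    | (rcases abs_cases (b - 2) with h | h <;> rcases abs_cases b with h' | h' <;> linarith)
    | (rw [abs_of_nonneg (by linarith : (0:ℝ) ≤ 3 - 2 * b)]; norm_num; linarith)
    | (rw [abs_of_nonneg (by linarith : (0:ℝ) ≤ 3 - b),
        abs_of_nonpos (by linarith : 1 + b - 2 ≤ 0)]; linarith)
    | (rw [abs_of_nonneg (by linarith : (0:ℝ) ≤ 3 - b),
        abs_of_nonneg (by linarith : 0 ≤ 3 - b - 2)]; linarith)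
    | (rw [abs_of_nonneg (by linarith : (0:ℝ) ≤ b),
        abs_of_nonneg (by linarith : 0 ≤ 4 - b - 2)]; linarith)
end

section
/- For any a, b ∈ [0,1/2) there exists c ∈ ℝ such that U_b ⊆ h(L_a), where h is the homothety of ℝ² with center (0,c) and ratio λ(a,b). -/
/-- The ratio λ(a,b) from Lemma 2.4. -/
noncomputable def lam (a b : ℝ) : ℝ :=
  if b ≤ 3 * a / (2 * (1 + 2 * a)) then 1 + (1 - b) * (1 + 2 * a) / (2 + a) else 3 / 2

theorem seg_mem {S : Set (ℝ × ℝ)} (hS : Convex ℝ S) {p q r s : ℝ} (h1 : (p, q) ∈ S)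
    (h2 : (r, s) ∈ S) (θ : ℝ) (h0 : 0 ≤ θ) (h3 : θ ≤ 1) :
    ((1 - θ) * p + θ * r, (1 - θ) * q + θ * s) ∈ S := by
  have := hS h1 h2 (sub_nonneg.2 h3) h0 (by ring)
  simpa using this

theorem hor_mem {S : Set (ℝ × ℝ)} (hS : Convex ℝ S) {w x y : ℝ} (h1 : (w, y) ∈ S)
    (h2 : (-w, y) ∈ S) (hx : x ≤ w) (hx' : -w ≤ x) : (x, y) ∈ S := by
  rcases eq_or_lt_of_le (show 0 ≤ w by linarith) with h | h
  · have : x = w := by linarith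
    rwa [this]
  · have := seg_mem hS h2 h1 ((x + w) / (2 * w)) (by apply div_nonneg <;> linarith)
      (by rw [div_le_one (by linarith)]; linarith)
    convert this using 2
    · field_simp
      ring
    · ring

theorem L_mem {a x y : ℝ} (ha : 0 ≤ a) (ha' : a < 1 / 2) (h1 : |x| ≤ y) (h2 : |x| ≤ 4 - y)
    (h3 : y ≤ 3) (h4 : 2 * a + (1 - a) * |x| ≤ (1 + a) * y) : (x, y) ∈ L a := by
  have hS : Convex ℝ (L a) := convex_convexHull ℝ _
  have m0 : ((0 : ℝ), 2 * a / (1 + a)) ∈ L a := subset_convexHull ℝ _ (by simp)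
  have m1 : ((1 : ℝ), (1 : ℝ)) ∈ L a := subset_convexHull ℝ _ (by simp)
  have m2 : ((-1 : ℝ), (1 : ℝ)) ∈ L a := subset_convexHull ℝ _ (by simp)
  have m3 : ((2 : ℝ), (2 : ℝ)) ∈ L a := subset_convexHull ℝ _ (by simp)
  have m4 : ((-2 : ℝ), (2 : ℝ)) ∈ L a := subset_convexHull ℝ _ (by simp)
  have m5 : ((1 : ℝ), (3 : ℝ)) ∈ L a := subset_convexHull ℝ _ (by simp)
  have m6 : ((-1 : ℝ), (3 : ℝ)) ∈ L a := subset_convexHull ℝ _ (by simp)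
  rcases le_total y 1 with hy | hy
  · have hp : 0 < 1 - a := by linarith
    have hq : 0 < 1 + a := by linarith
    have hxw : |x| ≤ ((1 + a) * y - 2 * a) / (1 - a) := by
      rw [le_div_iff₀ hp]; linarith
    have hw0 := (abs_nonneg x).trans hxw
    have hw1 : ((1 + a) * y - 2 * a) / (1 - a) ≤ 1 := by
      rw [div_le_one hp]; nlinarith
    have e : (1 - ((1 + a) * y - 2 * a) / (1 - a)) * (2 * a / (1 + a))
        + ((1 + a) * y - 2 * a) / (1 - a) * 1 = y := by
      field_simp
      ring
    have k1 := seg_mem hS m0 m1 _ hw0 hw1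
    have k2 := seg_mem hS m0 m2 _ hw0 hw1
    rw [e] at k1 k2
    refine hor_mem hS (w := ((1 + a) * y - 2 * a) / (1 - a)) ?_ ?_ (abs_le.1 hxw).2 (abs_le.1 hxw).1
    · simpa using k1
    · simpa using k2
  rcases le_total y 2 with hz | hz
  · refine hor_mem hS (w := y) ?_ ?_ (abs_le.1 h1).2 (abs_le.1 h1).1
    · convert seg_mem hS m1 m3 (y - 1) (by linarith) (by linarith) using 2 <;> ring
    · convert seg_mem hS m2 m4 (y - 1) (by linarith) (by linarith) using 2 <;> ring
  · refine hor_mem hS (w := 4 - y) ?_ ?_ (abs_le.1 h2).2 (abs_le.1 h2).1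
    · convert seg_mem hS m3 m5 (y - 2) (by linarith) (by linarith) using 2 <;> ring
    · convert seg_mem hS m4 m6 (y - 2) (by linarith) (by linarith) using 2 <;> ring

theorem img_mem {a l s x y : ℝ} (ha : 0 ≤ a) (ha' : a < 1 / 2) (hl : 1 < l)
    (h1 : |x| ≤ y - s) (h2 : |x| + y - s ≤ 4 * l)
    (h3 : y - s ≤ 3 * l) (h4 : 2 * a * l + (1 - a) * |x| ≤ (1 + a) * (y - s)) :
    (x, y) ∈ AffineMap.homothety ((0 : ℝ), s / (1 - l)) l '' L a := by
  have hl0 : 0 < l := by linarith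
  have hl1 : 1 - l ≠ 0 := by linarith
  refine ⟨(x / l, (y - s) / l), L_mem ha ha' ?_ ?_ ?_ ?_, ?_⟩
  · rw [abs_div, abs_of_pos hl0]; gcongr
  · rw [abs_div, abs_of_pos hl0, div_le_iff₀ hl0, sub_mul, div_mul_cancel₀ _ hl0.ne']; linarith
  · rw [div_le_iff₀ hl0]; linarith
  · rw [abs_div, abs_of_pos hl0, ← mul_div_assoc, ← mul_div_assoc, le_div_iff₀ hl0, add_mul,
      div_mul_cancel₀ _ hl0.ne']; linarith
  · simp only [AffineMap.homothety_apply, vsub_eq_sub, vadd_eq_add, Prod.mk_sub_mk, Prod.smul_mk,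
      Prod.mk_add_mk, smul_eq_mul]
    congr 1
    · field_simp
      ring
    · field_simp
      ring

theorem U_sub {a b l s : ℝ} (ha : 0 ≤ a) (ha' : a < 1 / 2) (hb : 0 ≤ b) (hb' : b < 1 / 2)
    (hl : 1 < l) (hl2 : l ≤ 2) (h1 : s ≤ -2 * b) (h2 : 6 - 2 * b - 4 * l ≤ s)
    (h3 : 4 - b - 3 * l ≤ s) (h4 : (1 + a) * s ≤ -2 * a * (l - b)) :
    U b ⊆ AffineMap.homothety ((0 : ℝ), s / (1 - l)) l '' L a := by
  have hc : Convex ℝ (AffineMap.homothety ((0 : ℝ), s / (1 - l)) l '' L a) :=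
    (convex_convexHull ℝ _).affine_image _
  have key : ∀ x y : ℝ, 0 ≤ x → x ≤ y - s → x + y - s ≤ 4 * l → y - s ≤ 3 * l →
      2 * a * l + (1 - a) * x ≤ (1 + a) * (y - s) →
      (x, y) ∈ AffineMap.homothety ((0 : ℝ), s / (1 - l)) l '' L a ∧
      (-x, y) ∈ AffineMap.homothety ((0 : ℝ), s / (1 - l)) l '' L a := by
    intro x y h0 k1 k2 k3 k4
    constructor
    · apply img_mem ha ha' hl <;> (try rw [abs_of_nonneg h0]) <;> assumption
    · apply img_mem ha ha' hl <;> (try rw [abs_neg, abs_of_nonneg h0]) <;> assumption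
  have hab := mul_nonneg ha hb
  have hal : a * l ≤ a * 2 := by gcongr
  have has : (1 + a) * s ≤ (1 + a) * (-2 * b) := by gcongr
  have v1 := key b b hb (by linarith) (by linarith) (by linarith) (by linarith)
  have v2 := key (2 + b) (2 - b) (by linarith) (by linarith) (by linarith) (by linarith)
    (by linarith)
  have v3 := key (3 - b) (3 - b) (by linarith) (by linarith) (by linarith) (by linarith)
    (by nlinarith)
  have v4 := key (3 - 2 * b) 3 (by linarith) (by linarith) (by linarith) (by linarith)
    (by nlinarith)
  have v5 := key b (4 - b) (by linarith) (by linarith) (by linarith) (by linarith)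
    (by nlinarith)
  rw [U, if_pos hb']
  apply convexHull_min _ hc
  intro p hp
  simp only [Set.mem_insert_iff, Set.mem_singleton_iff] at hp
  rcases hp with rfl | rfl | rfl | rfl | rfl | rfl | rfl | rfl | rfl | rfl
  exacts [v1.1, v1.2, v2.1, v2.2, v3.1, v3.2, v4.1, v4.2, v5.1, v5.2]

theorem stmt_4 (a b : ℝ) (ha : a ∈ Set.Ico (0 : ℝ) (1 / 2)) (hb : b ∈ Set.Ico (0 : ℝ) (1 / 2)) :
    ∃ c : ℝ, U b ⊆ AffineMap.homothety ((0 : ℝ), c) (lam a b) '' L a := by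
  obtain ⟨ha, ha'⟩ := ha
  obtain ⟨hb, hb'⟩ := hb
  have hab := mul_nonneg ha hb
  unfold lam
  split_ifs with h
  · rw [le_div_iff₀ (by linarith)] at h
    obtain ⟨l, hl⟩ : ∃ l, l = 1 + (1 - b) * (1 + 2 * a) / (2 + a) := ⟨_, rfl⟩
    rw [← hl]
    have e : l * (2 + a) = (2 + a) + (1 - b) * (1 + 2 * a) := by
      rw [hl]; field_simp
    have l1 : 3 / 2 ≤ l := by
      by_contra hh
      push Not at hh
      nlinarith
    have l2 : l ≤ 2 - b := by
      by_contra hh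
      push Not at hh
      nlinarith
    have hs : (1 + a) * (-2 * a * (l - b) / (1 + a)) = -2 * a * (l - b) := by
      field_simp
    have hs2 : 6 - 2 * b - 4 * l ≤ -2 * a * (l - b) / (1 + a) := by
      rw [le_div_iff₀ (by linarith)]; linarith
    refine ⟨_, U_sub (s := -2 * a * (l - b) / (1 + a)) ha ha' hb hb' (by linarith) (by linarith)
      ?_ hs2 (by linarith) hs.le⟩
    rw [div_le_iff₀ (by linarith)]
    nlinarith
  · rw [div_lt_iff₀ (by linarith) |> fun e => (not_le.trans e)] at h
    exact ⟨_, U_sub (s := -2 * b) ha ha' hb hb' (by norm_num) (by norm_num) le_rfl (by linarith)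
      (by linarith) (by linarith)⟩
end

section
/- Let a, b ∈ [0,1/2) and let c ∈ ℝ satisfy max{2a/(1+a), 2b/(1+b)} < c < 2. If λ ≥ 1 + max{ 2a(1−b)/(c + ca − 2a), 2b/c, 2(1−b)/(4−c) }, then U_b ⊆ h(L_a), where h is the homothety of ℝ² with center (0,c) and ratio λ. -/
lemma hh_comb {S : Set (ℝ × ℝ)} (hS : Convex ℝ S) {p q : ℝ × ℝ} (hp : p ∈ S) (hq : q ∈ S)
    (s : ℝ) (h0 : 0 ≤ s) (h1 : s ≤ 1) {x y : ℝ} (hx : x = (1 - s) * p.1 + s * q.1)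
    (hy : y = (1 - s) * p.2 + s * q.2) : ((x, y) : ℝ × ℝ) ∈ S := by
  have := hS hp hq (sub_nonneg.2 h1) h0 (by ring)
  convert this using 1
  ext <;> simp [hx, hy]

lemma hh_mem (a x y : ℝ) (ha0 : 0 ≤ a) (ha1 : a < 1 / 2)
    (h1 : |x| ≤ y) (h2 : |x| + y ≤ 4) (h3 : y ≤ 3)
    (h4 : 2 * a + (1 - a) * |x| ≤ (1 + a) * y) : ((x, y) : ℝ × ℝ) ∈ L a := by
  have hS : Convex ℝ (L a) := convex_convexHull ℝ _
  have sub := subset_convexHull ℝ ({((0 : ℝ), 2 * a / (1 + a)), (1, 1), (-1, 1), (2, 2), (-2, 2),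
    (1, 3), (-1, 3)} : Set (ℝ × ℝ))
  have p0 : ((0 : ℝ), 2 * a / (1 + a)) ∈ L a := sub (by simp)
  have p1 : ((1 : ℝ), (1 : ℝ)) ∈ L a := sub (by simp)
  have p2 : ((-1 : ℝ), (1 : ℝ)) ∈ L a := sub (by simp)
  have p3 : ((2 : ℝ), (2 : ℝ)) ∈ L a := sub (by simp)
  have p4 : ((-2 : ℝ), (2 : ℝ)) ∈ L a := sub (by simp)
  have p5 : ((1 : ℝ), (3 : ℝ)) ∈ L a := sub (by simp)
  have p6 : ((-1 : ℝ), (3 : ℝ)) ∈ L a := sub (by simp)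
  have q1 : ∀ t : ℝ, |t| ≤ 1 → ((t, 1) : ℝ × ℝ) ∈ L a := fun t ht => by
    obtain ⟨_, _⟩ := abs_le.1 ht
    exact hh_comb hS p2 p1 ((1 + t) / 2) (by linarith) (by linarith) (by ring) (by ring)
  have q2 : ∀ t : ℝ, |t| ≤ 1 → ((2 * t, 2) : ℝ × ℝ) ∈ L a := fun t ht => by
    obtain ⟨_, _⟩ := abs_le.1 ht
    exact hh_comb hS p4 p3 ((1 + t) / 2) (by linarith) (by linarith) (by ring) (by ring)
  have q3 : ∀ t : ℝ, |t| ≤ 1 → ((t, 3) : ℝ × ℝ) ∈ L a := fun t ht => by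
    obtain ⟨_, _⟩ := abs_le.1 ht
    exact hh_comb hS p6 p5 ((1 + t) / 2) (by linarith) (by linarith) (by ring) (by ring)
  have hdiv : ∀ w : ℝ, |x| ≤ w → |x / w| ≤ 1 ∧ x = w * (x / w) := fun w hw => by
    have h0 : 0 ≤ w := (abs_nonneg x).trans hw
    refine ⟨?_, ?_⟩
    · rw [abs_div, abs_of_nonneg h0]; exact div_le_one_of_le₀ hw h0
    · rcases h0.eq_or_lt with h | h
      · subst h
        have := abs_nonpos_iff.1 hw
        simp [this]
      · field_simp
  have hax := abs_nonneg x
  rcases le_total y 1 with hy | hy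
  · have hw : |x| ≤ ((1 + a) * y - 2 * a) / (1 - a) := by
      rw [le_div_iff₀ (by linarith)]; linarith
    obtain ⟨e1, e2⟩ := hdiv _ hw
    refine hh_comb hS p0 (q1 _ e1) (((1 + a) * y - 2 * a) / (1 - a)) (hax.trans hw) ?_ ?_ ?_
    · rw [div_le_one (by linarith)]; nlinarith
    · simp only [mul_zero, zero_add]; exact e2
    · have : 1 - a ≠ 0 := by linarith
      have : 1 + a ≠ 0 := by linarith
      field_simp
      ring
  · rcases le_total y 2 with hy2 | hy2
    · obtain ⟨e1, e2⟩ := hdiv _ h1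
      refine hh_comb hS (q1 _ e1) (q2 _ e1) (y - 1) (by linarith) (by linarith) ?_ ?_
      · simp only; linarith
      · ring
    · obtain ⟨e1, e2⟩ := hdiv (4 - y) (by linarith)
      refine hh_comb hS (q2 _ e1) (q3 _ e1) (y - 2) (by linarith) (by linarith) ?_ ?_
      · simp only; linarith
      · ring

theorem stmt_6 (a b c l : ℝ) (ha : a ∈ Set.Ico (0 : ℝ) (1 / 2))
    (hb : b ∈ Set.Ico (0 : ℝ) (1 / 2))
    (hc₁ : max (2 * a / (1 + a)) (2 * b / (1 + b)) < c) (hc₂ : c < 2)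
    (hl : l ≥ 1 + max (2 * a * (1 - b) / (c + c * a - 2 * a))
      (max (2 * b / c) (2 * (1 - b) / (4 - c)))) :
    U b ⊆ AffineMap.homothety ((0 : ℝ), c) l '' L a := by
  obtain ⟨ha0, ha1⟩ := ha
  obtain ⟨hb0, hb1⟩ := hb
  obtain ⟨hca, hcb⟩ := max_lt_iff.1 hc₁
  have hc0 : 0 < c := lt_of_le_of_lt (by positivity) hca
  rw [div_lt_iff₀ (by linarith)] at hca hcb
  obtain ⟨m, rfl⟩ : ∃ m, l = 1 + m := ⟨l - 1, by ring⟩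
  have hm := le_of_add_le_add_left hl
  obtain ⟨m1, hm⟩ := max_le_iff.1 hm
  obtain ⟨m2, m3⟩ := max_le_iff.1 hm
  have hm0 : 0 ≤ m := le_trans (by positivity) m2
  rw [div_le_iff₀ (by linarith)] at m1 m2 m3
  have key : ∀ x y : ℝ, |x| - y ≤ 2 * b → |x| + y - 4 ≤ 2 * (1 - b) → y - 3 ≤ 1 - b →
      2 * a + (1 - a) * |x| - (1 + a) * y ≤ m * (c + c * a - 2 * a) →
      ((x, y) : ℝ × ℝ) ∈ AffineMap.homothety ((0 : ℝ), c) (1 + m) '' L a := by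
    intro x y h1 h2 h3 h4
    have hl0 : 0 < 1 + m := by linarith
    refine ⟨(x / (1 + m), c + (y - c) / (1 + m)), ?_, ?_⟩
    · have e : c + (y - c) / (1 + m) = (c * m + y) / (1 + m) := by field_simp; ring
      rw [e]
      have hx : |x / (1 + m)| = |x| / (1 + m) := by rw [abs_div, abs_of_pos hl0]
      apply hh_mem a _ _ ha0 ha1
      · rw [hx]; gcongr; linarith
      · rw [hx, ← add_div, div_le_iff₀ hl0]; linarith
      · rw [div_le_iff₀ hl0]; nlinarith
      · rw [hx, ← mul_div_assoc, ← mul_div_assoc, le_div_iff₀ hl0, add_mul,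
          div_mul_cancel₀ _ hl0.ne']
        linarith
    · simp only [AffineMap.homothety_apply]
      ext
      · simp; field_simp
      · simp; field_simp; ring
  have hab : 0 ≤ a * b := mul_nonneg ha0 hb0
  have hab2 : a * b ≤ a := mul_le_of_le_one_right ha0 (by linarith)
  have hD : 0 ≤ m * (c + c * a - 2 * a) := mul_nonneg hm0 (by linarith)
  have k2 : 2 * b - 2 * a ≤ m * (c + c * a - 2 * a) := by
    by_cases h : 2 * b - 2 * a ≤ 2 * a * (1 - b)
    · linarith
    · have hd : 0 < c + c * a - 2 * a := by linarith
      have h5 : 2 * b * (c + c * a - 2 * a) ≤ m * c * (c + c * a - 2 * a) := by gcongr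
      have h6 : 0 ≤ a * (c * (1 + b) - 2 * b) := mul_nonneg ha0 (by linarith)
      refine le_of_mul_le_mul_right (a := c) ?_ hc0
      nlinarith
  rw [U, if_pos hb1]
  refine convexHull_min ?_ ((convex_convexHull ℝ _).affine_image _)
  have ab : |b| = b := abs_of_nonneg hb0
  have a2 : |2 + b| = 2 + b := abs_of_nonneg (by linarith)
  have a3 : |3 - b| = 3 - b := abs_of_nonneg (by linarith)
  have a4 : |3 - 2 * b| = 3 - 2 * b := abs_of_nonneg (by linarith)
  rintro p hp
  simp only [Set.mem_insert_iff, Set.mem_singleton_iff] at hp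
  rcases hp with rfl | rfl | rfl | rfl | rfl | rfl | rfl | rfl | rfl | rfl <;> apply key <;>
    (try simp only [abs_neg, ab, a2, a3, a4]) <;> linarith
end

section
/- Let K be a convex body in ℝ² whose boundary contains the six points (1,1), (−1,1), (2,2), (−2,2), (1,3), (−1,3) (the vertices of an affine-regular hexagon). Then the convex hull of these six points is contained in K, and K is contained in the hexagon with vertices (0,0), (3,1), (3,3), (0,4), (−3,3), (−3,1) (the hexagon formed by the pairwise intersections of the lines extending the sides of the inscribed hexagon). -/
theorem support_aux (K : Set (ℝ × ℝ)) (hK : IsConvexBody K) (a : ℝ × ℝ) (ha : a ∈ frontier K) :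
    ∃ u v : ℝ, ¬ (u = 0 ∧ v = 0) ∧ ∀ p ∈ K, u * p.1 + v * p.2 ≤ u * a.1 + v * a.2 := by
  obtain ⟨hc, hcomp, hne⟩ := hK
  obtain ⟨f, hf⟩ := geometric_hahn_banach_open_point hc.interior isOpen_interior
    (show a ∉ interior K from ha.2)
  have hlin : ∀ p : ℝ × ℝ, f p = f (1, 0) * p.1 + f (0, 1) * p.2 := by
    intro p
    have : p = p.1 • ((1 : ℝ), (0 : ℝ)) + p.2 • ((0 : ℝ), (1 : ℝ)) := by
      ext <;> simp
    conv_lhs => rw [this]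
    rw [map_add, map_smul, map_smul]
    simp only [smul_eq_mul]
    ring
  refine ⟨f (1, 0), f (0, 1), ?_, ?_⟩
  · rintro ⟨h1, h2⟩
    obtain ⟨c, hcc⟩ := hne
    have := hf c hcc
    rw [hlin c, hlin a, h1, h2] at this
    simp at this
  · intro p hp
    rw [← hlin, ← hlin]
    have hcl : p ∈ closure (interior K) := by
      rw [hc.closure_interior_eq_closure_of_nonempty_interior hne]
      exact subset_closure hp
    have hclosed : IsClosed {x : ℝ × ℝ | f x ≤ f a} :=
      isClosed_le f.continuous continuous_const
    exact closure_minimal (fun x hx => (hf x hx).le) hclosed hcl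

theorem vertex_aux (K : Set (ℝ × ℝ)) (hK : IsConvexBody K) (a d e p : ℝ × ℝ) (ha : a ∈ frontier K)
    (hd : d ∈ K) (he : e ∈ K) (hp : p ∈ K)
    (hdet : (d.1 - a.1) * (e.2 - a.2) - (d.2 - a.2) * (e.1 - a.1) ≠ 0)
    (α β : ℝ) (hα : 0 < α) (hβ : 0 < β)
    (h1 : p.1 = a.1 - α * (d.1 - a.1) - β * (e.1 - a.1))
    (h2 : p.2 = a.2 - α * (d.2 - a.2) - β * (e.2 - a.2)) : False := by
  obtain ⟨u, v, hn, h⟩ := support_aux K hK a ha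
  have hd' := h d hd
  have he' := h e he
  have hp' := h p hp
  rw [h1, h2] at hp'
  obtain ⟨s, hs⟩ : ∃ s, s = u * (d.1 - a.1) + v * (d.2 - a.2) := ⟨_, rfl⟩
  obtain ⟨t, ht⟩ : ∃ t, t = u * (e.1 - a.1) + v * (e.2 - a.2) := ⟨_, rfl⟩
  have hs0 : s ≤ 0 := by rw [hs]; linarith
  have ht0 : t ≤ 0 := by rw [ht]; linarith
  have hst : 0 ≤ α * s + β * t := by rw [hs, ht]; linarith
  have hs1 : s = 0 := by
    by_contra hne
    have : s < 0 := lt_of_le_of_ne hs0 hne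
    nlinarith [mul_pos hα (neg_pos.2 this), mul_nonneg hβ.le (neg_nonneg.2 ht0)]
  have ht1 : t = 0 := by
    by_contra hne
    have : t < 0 := lt_of_le_of_ne ht0 hne
    nlinarith [mul_pos hβ (neg_pos.2 this), mul_nonneg hα.le (neg_nonneg.2 hs0)]
  rw [hs] at hs1
  rw [ht] at ht1
  refine hn ⟨?_, ?_⟩
  · refine (mul_eq_zero.1 ?_).resolve_right hdet
    linear_combination (e.2 - a.2) * hs1 - (d.2 - a.2) * ht1
  · refine (mul_eq_zero.1 ?_).resolve_right hdet
    linear_combination (d.1 - a.1) * ht1 - (e.1 - a.1) * hs1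

theorem quad_aux (C : Set (ℝ × ℝ)) (hC : Convex ℝ C) (z : ℝ) (h0 : ((0 : ℝ), (0 : ℝ)) ∈ C)
    (h1 : (0, 4) ∈ C) (h2 : (z, 1) ∈ C) (h3 : (z, 3) ∈ C) (s y : ℝ) (hs : 0 ≤ s) (hs1 : s ≤ 1)
    (hy : s ≤ y) (hy1 : y ≤ 4 - s) : (s * z, y) ∈ C := by
  have hA : (s * z, s) ∈ C := by
    have := hC h0 h2 (sub_nonneg.2 hs1) hs (by ring)
    convert this using 1
    ext <;> simp
  have hB : (s * z, 4 - s) ∈ C := by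
    have := hC h1 h3 (sub_nonneg.2 hs1) hs (by ring)
    convert this using 1
    ext <;> simp
    ring
  have hpos : 0 < 4 - 2 * s := by linarith
  have := hC hA hB (a := 1 - (y - s) / (4 - 2 * s)) (b := (y - s) / (4 - 2 * s))
    (by rw [sub_nonneg, div_le_one hpos]; linarith)
    (div_nonneg (by linarith) hpos.le) (by ring)
  convert this using 1
  ext
  · simp; ring
  · have hne := hpos.ne'
    have hq : (y - s) / (4 - 2 * s) * (4 - 2 * s) = y - s := div_mul_cancel₀ _ hne
    simp only [Prod.snd_add, Prod.smul_snd, smul_eq_mul]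
    linear_combination -hq

theorem stmt_7 (K : Set (ℝ × ℝ)) (hK : IsConvexBody K)
    (hbd : ({((1 : ℝ), (1 : ℝ)), (-1, 1), (2, 2), (-2, 2), (1, 3), (-1, 3)} : Set (ℝ × ℝ))
      ⊆ frontier K) :
    convexHull ℝ ({((1 : ℝ), (1 : ℝ)), (-1, 1), (2, 2), (-2, 2), (1, 3), (-1, 3)} : Set (ℝ × ℝ))
      ⊆ K ∧
    K ⊆ convexHull ℝ
      ({((0 : ℝ), (0 : ℝ)), (3, 1), (3, 3), (0, 4), (-3, 3), (-3, 1)} : Set (ℝ × ℝ)) := by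
  have hKm := hbd.trans hK.2.1.isClosed.frontier_subset
  refine ⟨convexHull_min hKm hK.1, ?_⟩
  rintro ⟨x, y⟩ hp
  have D1 : 1 ≤ y ∨ x ≤ y := by
    by_contra! hcon
    obtain ⟨q1, q2⟩ := hcon
    refine vertex_aux K hK (1, 1) (-1, 1) (2, 2) (x, y) (hbd (by simp)) (hKm (by simp)) (hKm (by simp)) hp
      (by norm_num) ((x - y) / 2) (1 - y) (by linarith) (by linarith) ?_ ?_ <;> simp <;> ring
  have D2 : 1 ≤ y ∨ 0 ≤ x + y := by
    by_contra! hcon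
    obtain ⟨q1, q2⟩ := hcon
    refine vertex_aux K hK (-1, 1) (1, 1) (-2, 2) (x, y) (hbd (by simp)) (hKm (by simp)) (hKm (by simp)) hp
      (by norm_num) ((-x - y) / 2) (1 - y) (by linarith) (by linarith) ?_ ?_ <;> simp <;> ring
  have D3 : x ≤ y ∨ x + y ≤ 4 := by
    by_contra! hcon
    obtain ⟨q1, q2⟩ := hcon
    refine vertex_aux K hK (2, 2) (1, 1) (1, 3) (x, y) (hbd (by simp)) (hKm (by simp)) (hKm (by simp)) hp
      (by norm_num) ((x + y - 4) / 2) ((x - y) / 2) (by linarith) (by linarith) ?_ ?_ <;> simp <;> ring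
  have D4 : 0 ≤ x + y ∨ y - x ≤ 4 := by
    by_contra! hcon
    obtain ⟨q1, q2⟩ := hcon
    refine vertex_aux K hK (-2, 2) (-1, 1) (-1, 3) (x, y) (hbd (by simp)) (hKm (by simp)) (hKm (by simp)) hp
      (by norm_num) ((y - x - 4) / 2) ((-x - y) / 2) (by linarith) (by linarith) ?_ ?_ <;> simp <;> ring
  have D5 : y ≤ 3 ∨ x + y ≤ 4 := by
    by_contra! hcon
    obtain ⟨q1, q2⟩ := hcon
    refine vertex_aux K hK (1, 3) (-1, 3) (2, 2) (x, y) (hbd (by simp)) (hKm (by simp)) (hKm (by simp)) hp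
      (by norm_num) ((x + y - 4) / 2) (y - 3) (by linarith) (by linarith) ?_ ?_ <;> simp <;> ring
  have D6 : y ≤ 3 ∨ y - x ≤ 4 := by
    by_contra! hcon
    obtain ⟨q1, q2⟩ := hcon
    refine vertex_aux K hK (-1, 3) (1, 3) (-2, 2) (x, y) (hbd (by simp)) (hKm (by simp)) (hKm (by simp)) hp
      (by norm_num) ((y - x - 4) / 2) (y - 3) (by linarith) (by linarith) ?_ ?_ <;> simp <;> ring
  have E1 : x ≤ 3 := by
    by_contra! hcon
    rcases D1 with D1 | D1 <;> rcases D2 with D2 | D2 <;> rcases D3 with D3 | D3 <;>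
    rcases D4 with D4 | D4 <;> rcases D5 with D5 | D5 <;> rcases D6 with D6 | D6 <;> linarith
  have E2 : -3 ≤ x := by
    by_contra! hcon
    rcases D1 with D1 | D1 <;> rcases D2 with D2 | D2 <;> rcases D3 with D3 | D3 <;>
    rcases D4 with D4 | D4 <;> rcases D5 with D5 | D5 <;> rcases D6 with D6 | D6 <;> linarith
  have E3 : x ≤ 3 * y := by
    by_contra! hcon
    rcases D1 with D1 | D1 <;> rcases D2 with D2 | D2 <;> rcases D3 with D3 | D3 <;>
    rcases D4 with D4 | D4 <;> rcases D5 with D5 | D5 <;> rcases D6 with D6 | D6 <;> linarith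
  have E4 : -x ≤ 3 * y := by
    by_contra! hcon
    rcases D1 with D1 | D1 <;> rcases D2 with D2 | D2 <;> rcases D3 with D3 | D3 <;>
    rcases D4 with D4 | D4 <;> rcases D5 with D5 | D5 <;> rcases D6 with D6 | D6 <;> linarith
  have E5 : 3 * y ≤ 12 - x := by
    by_contra! hcon
    rcases D1 with D1 | D1 <;> rcases D2 with D2 | D2 <;> rcases D3 with D3 | D3 <;>
    rcases D4 with D4 | D4 <;> rcases D5 with D5 | D5 <;> rcases D6 with D6 | D6 <;> linarith
  have E6 : 3 * y ≤ 12 + x := by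
    by_contra! hcon
    rcases D1 with D1 | D1 <;> rcases D2 with D2 | D2 <;> rcases D3 with D3 | D3 <;>
    rcases D4 with D4 | D4 <;> rcases D5 with D5 | D5 <;> rcases D6 with D6 | D6 <;> linarith
  have hsub := subset_convexHull ℝ
    ({((0 : ℝ), (0 : ℝ)), (3, 1), (3, 3), (0, 4), (-3, 3), (-3, 1)} : Set (ℝ × ℝ))
  rcases le_total 0 x with hx | hx
  · have := quad_aux _ (convex_convexHull ℝ _) 3 (hsub (by simp)) (hsub (by simp)) (hsub (by simp))
      (hsub (by simp)) (x / 3) y (by linarith) (by linarith) (by linarith) (by linarith)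
    rwa [show x / 3 * 3 = x by ring] at this
  · have := quad_aux _ (convex_convexHull ℝ _) (-3) (hsub (by simp)) (hsub (by simp))
      (hsub (by simp)) (hsub (by simp)) (-x / 3) y (by linarith) (by linarith) (by linarith)
      (by linarith)
    rwa [show -x / 3 * -3 = x by ring] at this
end

section
/- Let H be the hexagon in ℝ² with vertices (0, 4/3), (1, 5/3), (−1, 5/3), (1, 7/3), (−1, 7/3), (0, 8/3). For every a ∈ [0,1], U_a is contained in the homothety of H with center (0,2) and ratio 3 − a. -/
/-- The hexagon H with vertices (0,4/3), (±1,5/3), (±1,7/3), (0,8/3). -/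
noncomputable def hexH : Set (ℝ × ℝ) :=
  convexHull ℝ {((0 : ℝ), (4 / 3 : ℝ)), (1, 5 / 3), (-1, 5 / 3), (1, 7 / 3), (-1, 7 / 3),
    (0, 8 / 3)}

theorem hexH_half (e x y : ℝ) (h1 : ((e, 5/3) : ℝ × ℝ) ∈ hexH) (h2 : ((e, 7/3) : ℝ × ℝ) ∈ hexH)
    (hx0 : 0 ≤ x) (hx : x ≤ 1) (hu : 3 * (y - 2) + x ≤ 2) (hl : 3 * (2 - y) + x ≤ 2) :
    ((e * x, y) : ℝ × ℝ) ∈ hexH := by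
  have hc : Convex ℝ hexH := convex_convexHull ℝ _
  have h3 : (((0:ℝ), (4/3:ℝ)) : ℝ × ℝ) ∈ hexH := subset_convexHull ℝ _ (by simp)
  have h4 : (((0:ℝ), (8/3:ℝ)) : ℝ × ℝ) ∈ hexH := subset_convexHull ℝ _ (by simp)
  have hb := hc h3 h1 (sub_nonneg.2 hx) hx0 (by ring)
  have ht := hc h4 h2 (sub_nonneg.2 hx) hx0 (by ring)
  have hd : 0 < 4 - 2 * x := by linarith
  have hs0 : 0 ≤ (3 * y - 4 - x) / (4 - 2 * x) := div_nonneg (by linarith) hd.le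
  have hs1 : (3 * y - 4 - x) / (4 - 2 * x) ≤ 1 := (div_le_one hd).2 (by linarith)
  have h := hc hb ht (sub_nonneg.2 hs1) hs0 (by ring)
  convert h using 1
  have hd' := hd.ne'
  ext
  · simp
    ring
  · simp
    generalize hs : (3 * y - 4 - x) / (4 - 2 * x) = s
    rw [div_eq_iff hd'] at hs
    linarith

theorem mem_hexH (x y : ℝ) (hx : |x| ≤ 1) (h : 3 * |y - 2| + |x| ≤ 2) :
    ((x, y) : ℝ × ℝ) ∈ hexH := by
  have hu := le_abs_self (y - 2)
  have hl := neg_abs_le (y - 2)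
  rcases le_total 0 x with h0 | h0
  · rw [abs_of_nonneg h0] at hx h
    have := hexH_half 1 x y (subset_convexHull ℝ _ (by simp)) (subset_convexHull ℝ _ (by simp))
      h0 hx (by linarith) (by linarith)
    simpa using this
  · rw [abs_of_nonpos h0] at hx h
    have := hexH_half (-1) (-x) y (subset_convexHull ℝ _ (by simp))
      (subset_convexHull ℝ _ (by simp)) (by linarith) hx (by linarith) (by linarith)
    simpa using this

theorem mem_img (r x y : ℝ) (hr : 0 < r) (hx : |x| ≤ r) (h : 3 * |y - 2| + |x| ≤ 2 * r) :
    ((x, y) : ℝ × ℝ) ∈ AffineMap.homothety ((0 : ℝ), (2 : ℝ)) r '' hexH := by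
  refine ⟨(x / r, 2 + (y - 2) / r), mem_hexH _ _ ?_ ?_, ?_⟩
  · rw [abs_div, abs_of_pos hr]
    exact (div_le_one hr).2 hx
  · rw [add_sub_cancel_left, abs_div, abs_div, abs_of_pos hr, ← mul_div_assoc, ← add_div]
    exact (div_le_iff₀ hr).2 h
  · have := hr.ne'
    ext <;> simp [AffineMap.homothety_apply] <;> field_simp <;> ring

theorem stmt_8 (a : ℝ) (ha : a ∈ Set.Icc (0 : ℝ) 1) :
    U a ⊆ AffineMap.homothety ((0 : ℝ), (2 : ℝ)) (3 - a) '' hexH := by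
  obtain ⟨h0, h1⟩ := ha
  have hc : Convex ℝ (AffineMap.homothety ((0 : ℝ), (2 : ℝ)) (3 - a) '' hexH) :=
    (convex_convexHull ℝ _).affine_image _
  have hr : 0 < 3 - a := by linarith
  unfold U
  split_ifs with h
  all_goals
    refine convexHull_min ?_ hc
    intro p hp
    simp only [Set.mem_insert_iff, Set.mem_singleton_iff] at hp
  on_goal 1 => rcases hp with hp | hp | hp | hp | hp | hp | hp | hp | hp | hp
  on_goal 11 => rcases hp with hp | hp | hp | hp | hp | hp | hp | hp | hp | hp | hp | hp
  all_goals
    subst hp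
    apply mem_img _ _ _ hr
    · rw [abs_le]
      constructor <;> linarith
    · try simp only [abs_neg]
      rcases abs_cases (_ - 2 : ℝ) with ⟨e, _⟩ | ⟨e, _⟩ <;> rw [e]
      all_goals rw [abs_of_nonneg (by linarith)]; linarith
end

section
/- Let a, b ∈ [0,1/2) satisfy b ≤ 3a/(2(1+2a)) and a ≤ 3b/(2(1+2b)). Then (1 + (1−b)(1+2a)/(2+a)) · (1 + (1−a)(1+2b)/(2+b)) ≤ ((289 − 60√3)/121)² < 2.35. -/
theorem aux_13 (a b : ℝ) (ha : 0 ≤ a) (ha' : a < 1 / 2) (hb : 0 ≤ b)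
    (h₁ : b ≤ 3 * a / (2 * (1 + 2 * a))) :
    1 + (1 - a) * (1 + 2 * b) / (2 + b) ≤ (289 - 60 * Real.sqrt 3) / 121 := by
  have h : b * (2 * (1 + 2 * a)) ≤ 3 * a := (le_div_iff₀ (by positivity)).1 h₁
  have hs : Real.sqrt 3 ^ 2 = 3 := Real.sq_sqrt (by norm_num)
  have e1 : (1 - a) * (1 + 2 * b) / (2 + b) ≤ 2 * (1 - a) * (1 + 5 * a) / (4 + 11 * a) := by
    rw [div_le_div_iff₀ (by positivity) (by positivity)]
    have : (1 + 2 * b) * (4 + 11 * a) ≤ 2 * (1 + 5 * a) * (2 + b) := by nlinarith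
    have := mul_le_mul_of_nonneg_left this (show 0 ≤ 1 - a by linarith)
    linarith
  have e2 : 2 * (1 - a) * (1 + 5 * a) / (4 + 11 * a) ≤ (168 - 60 * Real.sqrt 3) / 121 := by
    rw [div_le_div_iff₀ (by positivity) (by norm_num)]
    nlinarith [sq_nonneg (4 + 11 * a - 3 * Real.sqrt 3)]
  linarith

theorem stmt_13 (a b : ℝ) (ha : a ∈ Set.Ico (0 : ℝ) (1 / 2)) (hb : b ∈ Set.Ico (0 : ℝ) (1 / 2))
    (h₁ : b ≤ 3 * a / (2 * (1 + 2 * a))) (h₂ : a ≤ 3 * b / (2 * (1 + 2 * b))) :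
    (1 + (1 - b) * (1 + 2 * a) / (2 + a)) * (1 + (1 - a) * (1 + 2 * b) / (2 + b))
      ≤ ((289 - 60 * Real.sqrt 3) / 121) ^ 2 ∧
    ((289 - 60 * Real.sqrt 3) / 121) ^ 2 < 2.35 := by
  obtain ⟨ha, ha'⟩ := ha
  obtain ⟨hb, hb'⟩ := hb
  have hs : Real.sqrt 3 ^ 2 = 3 := Real.sq_sqrt (by norm_num)
  have A := aux_13 a b ha ha' hb h₁
  have B := aux_13 b a hb hb' ha h₂
  have hA : 0 ≤ (1 - a) * (1 + 2 * b) / (2 + b) :=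
    div_nonneg (mul_nonneg (by linarith) (by linarith)) (by linarith)
  constructor
  · rw [sq]
    exact mul_le_mul B A (by linarith) (by linarith)
  · have : (1.732 : ℝ) < Real.sqrt 3 := Real.lt_sqrt_of_sq_lt (by norm_num)
    norm_num at this ⊢
    nlinarith
end

section
/- Let α ∈ (0,1/2) and let a, b ∈ [0,α] satisfy b ≤ 3a/(2(1+2a)) and a > 3b/(2(1+2b)). Then λ(a,b)·λ(b,a) = (3/2)·(1 + (1−b)(1+2a)/(2+a)) ≤ 9(1+α)/(2(2+α)). -/
theorem stmt_14 (α a b : ℝ) (hα : α ∈ Set.Ioo (0 : ℝ) (1 / 2))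
    (ha : a ∈ Set.Icc (0 : ℝ) α) (hb : b ∈ Set.Icc (0 : ℝ) α)
    (h₁ : b ≤ 3 * a / (2 * (1 + 2 * a))) (h₂ : a > 3 * b / (2 * (1 + 2 * b))) :
    lam a b * lam b a = 3 / 2 * (1 + (1 - b) * (1 + 2 * a) / (2 + a)) ∧
    lam a b * lam b a ≤ 9 * (1 + α) / (2 * (2 + α)) := by
  obtain ⟨ha0, ha1⟩ := ha
  obtain ⟨hb0, hb1⟩ := hb
  obtain ⟨hα0, hα1⟩ := hα
  have e : lam a b * lam b a = 3 / 2 * (1 + (1 - b) * (1 + 2 * a) / (2 + a)) := by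
    unfold lam
    rw [if_pos h₁, if_neg (not_le.mpr h₂)]
    ring
  refine ⟨e, ?_⟩
  rw [e]
  have k1 : (1 - b) * (1 + 2 * a) / (2 + a) ≤ (1 + 2 * α) / (2 + α) := by
    rw [div_le_div_iff₀ (by linarith) (by linarith)]
    have : 0 ≤ b * (1 + 2 * a) * (2 + α) := by positivity
    nlinarith
  have k2 : 9 * (1 + α) / (2 * (2 + α)) = 3 / 2 * (1 + (1 + 2 * α) / (2 + α)) := by
    have : 2 + α ≠ 0 := by linarith
    field_simp
    ring
  rw [k2]
  linarith
end
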